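/- arXiv:1402.6134 — 2 statements merged into one kernel-verified Lean document; each statement's English description precedes it below -/
import Mathlib

section
/- Let n ≥ 1, 1 < p < ∞ and β < p − 1. Let Ω₀ ⊆ ℝⁿ be an open set whose complement Ω₀^c is nonempty and unbounded and satisfies: there exist 0 ≤ s < p − β and c₀ > 0 with |(Ω₀^c)_r ∩ B(x,R)| ≥ c₀ (r/R)^s |B(x,R)| for every x ∈ Ω₀^c and all 0 < r < R < ∞ (the upper Assouad codimension of Ω₀^c is less than p − β). Let F ⊆ closure(Ω₀) be a nonempty closed set satisfying: there exist t > p − β and C_A ≥ 1 with |F_r ∩ B(x,R)| ≤ C_A (r/R)^t |B(x,R)| for every x ∈ F and all 0 < r < R < ∞ (the lower Assouad codimension of F exceeds p − β). Set Ω = Ω₀ \ F. Then there exists C > 0 such that ∫_Ω |u(x)|^p d_Ω(x)^{β−p} dx ≤ C ∫_Ω ‖∇u(x)‖^p d_Ω(x)^β dx for every Lipschitz function u : ℝⁿ → ℝ with compact support contained in Ω₀; in particular the test functions need not vanish on F ∩ Ω₀. -/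
open MeasureTheory Metric ENNReal

/-!
Write `γ = p - β > 1` and `A = Ω₀ᶜ`. Averaging `|u x| ≤ |u y| + |u y - u x|` over `y` near `x`
bounds `∫ |u|` over an `R`-neighborhood of `A` by a multiple of `∫ |u|` over the `lR`-neighborhood
plus `R` times a gradient integral; the multiple is at most `C l ^ (-s)`, because the
`lR`-neighborhood of a thick set meets every ball substantially. For a thin set `F` the roles are
exchanged: the `lR`-neighborhood fills only a proportion `C l ^ t` of each ball, so `∫ |u|` over
it is controlled by `C l ^ t` times `∫ |u|` over a larger one. Integrating against
`R ^ (-γ - 1) dR` turns these estimates into estimates of `∫ |u| d ^ (-γ)` in which the `u`-term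
on the right carries a factor `C l ^ (γ - s)` or `C l ^ (t - γ)`. For small `l` it is at most one
half and is absorbed, which requires `∫ |u| d ^ (-γ)` to be finite: near `A` because `u` vanishes
there, near `F` by thinness.

Since the distance to `A ∪ F` is the smaller of the two distances, adding the two inequalities
gives the `L¹` Hardy inequality off `A ∪ F`. Applying it to `|u| ^ p`, Hölder's inequality and a
second absorption give the exponent `p`.
-/

section Poincare

lemma enorm_sub_le_setLIntegral_enorm_deriv {φ : ℝ → ℝ} {L : NNReal} (hφ : LipschitzWith L φ)
    {a b : ℝ} (hab : a ≤ b) : ‖φ b - φ a‖ₑ ≤ ∫⁻ τ in Set.Ioc a b, ‖deriv φ τ‖ₑ := by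
  rw [← hφ.lipschitzOnWith.absolutelyContinuousOnInterval.integral_deriv_eq_sub,
    intervalIntegral.integral_of_le hab]
  exact enorm_integral_le_lintegral_enorm _

lemma setLIntegral_closedBall_eq_zero_add {G : Type*} [NormedAddCommGroup G] [MeasurableSpace G]
    [BorelSpace G] {μ : Measure G} [μ.IsAddLeftInvariant] (f : G → ℝ≥0∞) (x : G) (ρ : ℝ) :
    ∫⁻ y in closedBall x ρ, f y ∂μ = ∫⁻ h in closedBall 0 ρ, f (x + h) ∂μ := by
  rw [← (measurePreserving_add_left μ x).setLIntegral_comp_preimage_emb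
    (measurableEmbedding_addLeft x), preimage_add_closedBall, sub_self]

lemma setLIntegral_setLIntegral_inter_closedBall {X : Type*} [PseudoMetricSpace X]
    [SecondCountableTopology X] [MeasurableSpace X] [OpensMeasurableSpace X] {μ : Measure X}
    [SFinite μ] (S T : Set X) (ρ : ℝ) {f : X → ℝ≥0∞} (hf : Measurable f) :
    ∫⁻ x in S, ∫⁻ y in T ∩ closedBall x ρ, f y ∂μ ∂μ =
      ∫⁻ y in T, f y * μ (S ∩ closedBall y ρ) ∂μ := by
  let D : Set (X × X) := {q | dist q.2 q.1 ≤ ρ}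
  have hD : MeasurableSet D := measurableSet_le (by fun_prop) measurable_const
  let k : X × X → ℝ≥0∞ := D.indicator fun q ↦ f q.2
  have hk : Measurable k := (hf.comp measurable_snd).indicator hD
  have integral_snd (x : X) : ∫⁻ y in T ∩ closedBall x ρ, f y ∂μ = ∫⁻ y in T, k (x, y) ∂μ := by
    rw [Set.inter_comm, ← Measure.restrict_restrict measurableSet_closedBall,
      ← lintegral_indicator measurableSet_closedBall]
    rfl
  have integral_fst (y : X) : ∫⁻ x in S, k (x, y) ∂μ = f y * μ (S ∩ closedBall y ρ) := by
    have hky : (fun x ↦ k (x, y)) = (closedBall y ρ).indicator fun _ ↦ f y := by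
      ext x
      simp only [k, D, Set.indicator, Set.mem_ofPred_eq, mem_closedBall, dist_comm]
    rw [hky, lintegral_indicator_const measurableSet_closedBall,
      Measure.restrict_apply measurableSet_closedBall, Set.inter_comm]
  simp_rw [integral_snd]
  rw [lintegral_lintegral_swap (f := fun x y ↦ k (x, y)) hk.aemeasurable]
  simp_rw [integral_fst]

variable {E : Type*} [NormedAddCommGroup E] [NormedSpace ℝ E] [MeasurableSpace E] [BorelSpace E]
  [FiniteDimensional ℝ E] {μ : Measure E} [μ.IsAddHaarMeasure] {u : E → ℝ} {L : NNReal}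

lemma ae_ae_differentiableAt_add_smul (hu : LipschitzWith L u) (h : E) :
    ∀ᵐ x ∂μ, ∀ᵐ τ : ℝ, DifferentiableAt ℝ u (x + τ • h) := by
  have hshift : ∀ᵐ τ : ℝ, ∀ᵐ x ∂μ, DifferentiableAt ℝ u (x + τ • h) := .of_forall fun τ ↦
    (measurePreserving_add_right μ (τ • h)).quasiMeasurePreserving.ae hu.ae_differentiableAt
  rwa [Measure.ae_ae_comm] at hshift
  exact (measurableSet_of_differentiableAt ℝ u).preimage
    (by fun_prop : Measurable fun q : ℝ × E ↦ q.2 + q.1 • h)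

lemma ae_enorm_add_sub_le_lintegral_enorm_fderiv (hu : LipschitzWith L u) (h : E) :
    ∀ᵐ x ∂μ, ‖u (x + h) - u x‖ₑ ≤
      ‖h‖ₑ * ∫⁻ τ in Set.Ioc (0 : ℝ) 1, ‖fderiv ℝ u (x + τ • h)‖ₑ := by
  filter_upwards [ae_ae_differentiableAt_add_smul hu h] with x hx
  have hline : LipschitzWith ‖h‖₊ fun τ : ℝ ↦ x + τ • h := by
    refine LipschitzWith.of_dist_le_mul fun σ τ ↦ ?_
    rw [dist_add_left, dist_eq_norm, ← sub_smul, norm_smul, mul_comm, dist_eq_norm, coe_nnnorm]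
  have hderiv {τ : ℝ} (hτ : DifferentiableAt ℝ u (x + τ • h)) :
      deriv (fun τ : ℝ ↦ u (x + τ • h)) τ = fderiv ℝ u (x + τ • h) h := by
    have hd : HasDerivAt (fun τ : ℝ ↦ x + τ • h) h τ := by
      simpa using ((hasDerivAt_id τ).smul_const h).const_add x
    exact (hτ.hasFDerivAt.comp_hasDerivAt τ hd).deriv
  calc ‖u (x + h) - u x‖ₑ
      ≤ ∫⁻ τ in Set.Ioc (0 : ℝ) 1, ‖deriv (fun τ : ℝ ↦ u (x + τ • h)) τ‖ₑ := by
        have := enorm_sub_le_setLIntegral_enorm_deriv (φ := fun τ ↦ u (x + τ • h))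
          (hu.comp hline) zero_le_one
        rwa [one_smul, zero_smul, add_zero] at this
    _ ≤ ∫⁻ τ in Set.Ioc (0 : ℝ) 1, ‖h‖ₑ * ‖fderiv ℝ u (x + τ • h)‖ₑ := by
        refine lintegral_mono_ae ?_
        filter_upwards [ae_restrict_of_ae hx] with τ hτ
        rw [hderiv hτ, mul_comm]
        exact ContinuousLinearMap.le_opENorm _ _
    _ = _ := lintegral_const_mul' _ _ enorm_ne_top

lemma setLIntegral_enorm_add_sub_le (hu : LipschitzWith L u) (A : Set E) (h : E) :
    ∫⁻ x in A, ‖u (x + h) - u x‖ₑ ∂μ ≤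
      ‖h‖ₑ * ∫⁻ x in cthickening ‖h‖ A, ‖fderiv ℝ u x‖ₑ ∂μ := by
  have hfderiv : Measurable fun x ↦ ‖fderiv ℝ u x‖ₑ := (measurable_fderiv ℝ u).enorm
  have hshift (τ : ℝ) (hτ : τ ∈ Set.Ioc (0 : ℝ) 1) :
      ∫⁻ x in A, ‖fderiv ℝ u (x + τ • h)‖ₑ ∂μ ≤
        ∫⁻ x in cthickening ‖h‖ A, ‖fderiv ℝ u x‖ₑ ∂μ := by
    have hsub : A ⊆ (· + τ • h) ⁻¹' cthickening ‖h‖ A := fun x hx ↦ by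
      refine mem_cthickening_of_dist_le _ x _ _ hx ?_
      rw [dist_self_add_left, norm_smul, Real.norm_of_nonneg hτ.1.le]
      exact mul_le_of_le_one_left (norm_nonneg h) hτ.2
    calc _ ≤ ∫⁻ x in (· + τ • h) ⁻¹' cthickening ‖h‖ A, ‖fderiv ℝ u (x + τ • h)‖ₑ ∂μ :=
          lintegral_mono_set hsub
      _ = _ := (measurePreserving_add_right μ (τ • h)).setLIntegral_comp_preimage
          isClosed_cthickening.measurableSet hfderiv
  calc ∫⁻ x in A, ‖u (x + h) - u x‖ₑ ∂μ
      ≤ ∫⁻ x in A, (‖h‖ₑ * ∫⁻ τ in Set.Ioc (0 : ℝ) 1, ‖fderiv ℝ u (x + τ • h)‖ₑ) ∂μ :=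
        lintegral_mono_ae (ae_restrict_of_ae (ae_enorm_add_sub_le_lintegral_enorm_fderiv hu h))
    _ = ‖h‖ₑ * ∫⁻ τ in Set.Ioc (0 : ℝ) 1, ∫⁻ x in A, ‖fderiv ℝ u (x + τ • h)‖ₑ ∂μ := by
        rw [lintegral_const_mul' _ _ enorm_ne_top, lintegral_lintegral_swap]
        exact (hfderiv.comp
          (by fun_prop : Measurable fun q : E × ℝ ↦ q.1 + q.2 • h)).aemeasurable
    _ ≤ ‖h‖ₑ * ∫⁻ _ in Set.Ioc (0 : ℝ) 1, ∫⁻ x in cthickening ‖h‖ A, ‖fderiv ℝ u x‖ₑ ∂μ := by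
        gcongr ‖h‖ₑ * ?_
        exact setLIntegral_mono measurable_const hshift
    _ = _ := by simp

lemma measurable_setLIntegral_closedBall_enorm_sub (hu : Continuous u) (ρ : ℝ) :
    Measurable fun x ↦ ∫⁻ y in closedBall x ρ, ‖u y - u x‖ₑ ∂μ := by
  simp_rw [setLIntegral_closedBall_eq_zero_add (fun y ↦ ‖u y - u _‖ₑ)]
  have hcont : Continuous fun q : E × E ↦ ‖u (q.1 + q.2) - u q.1‖ₑ := by fun_prop
  exact hcont.measurable.lintegral_prod_right'

lemma setLIntegral_setLIntegral_closedBall_enorm_sub_le (hu : LipschitzWith L u) (A : Set E)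
    (ρ : ℝ) :
    ∫⁻ x in A, ∫⁻ y in closedBall x ρ, ‖u y - u x‖ₑ ∂μ ∂μ ≤
      ENNReal.ofReal ρ * (∫⁻ x in cthickening ρ A, ‖fderiv ℝ u x‖ₑ ∂μ) * μ (closedBall 0 ρ) := by
  simp_rw [setLIntegral_closedBall_eq_zero_add (fun y ↦ ‖u y - u _‖ₑ)]
  have hcont := hu.continuous
  have hmeas : Measurable fun q : E × E ↦ ‖u (q.1 + q.2) - u q.1‖ₑ :=
    (by fun_prop : Continuous _).measurable
  rw [lintegral_lintegral_swap hmeas.aemeasurable, ← setLIntegral_const]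
  refine setLIntegral_mono measurable_const fun h hh ↦ ?_
  have hhρ : ‖h‖ ≤ ρ := mem_closedBall_zero_iff.1 hh
  calc _ ≤ _ := setLIntegral_enorm_add_sub_le hu A h
    _ ≤ _ := by
      gcongr
      · rw [← ofReal_norm]
        exact ENNReal.ofReal_le_ofReal hhρ
      · exact cthickening_mono hhρ A

lemma mul_enorm_le_setLIntegral_enorm_add_setLIntegral_enorm_sub {X : Type*} [MeasurableSpace X]
    {μ : Measure X} {u : X → ℝ} (hu : Measurable u) {S B : Set X} (hSB : S ⊆ B) (x : X)
    {m : ℝ≥0∞} (hm : m ≤ μ S) :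
    m * ‖u x‖ₑ ≤ (∫⁻ y in S, ‖u y‖ₑ ∂μ) + ∫⁻ y in B, ‖u y - u x‖ₑ ∂μ :=
  calc m * ‖u x‖ₑ ≤ ∫⁻ _ in S, ‖u x‖ₑ ∂μ := by
        rw [setLIntegral_const, mul_comm]
        gcongr
    _ ≤ ∫⁻ y in S, (‖u y‖ₑ + ‖u y - u x‖ₑ) ∂μ := by
        refine lintegral_mono fun y ↦ ?_
        simpa using enorm_sub_le (a := u y) (b := u y - u x)
    _ = (∫⁻ y in S, ‖u y‖ₑ ∂μ) + ∫⁻ y in S, ‖u y - u x‖ₑ ∂μ := lintegral_add_left hu.enorm _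
    _ ≤ _ := by gcongr

lemma mul_setLIntegral_enorm_le_add_setLIntegral_enorm_fderiv (hu : LipschitzWith L u)
    {A T : Set E} (hA : MeasurableSet A) {ρ : ℝ} (hρ : 0 < ρ) {m K : ℝ≥0∞}
    (hm : ∀ x ∈ A, m * μ (closedBall x ρ) ≤ μ (T ∩ closedBall x ρ))
    (hK : ∀ y ∈ T, μ (A ∩ closedBall y ρ) ≤ K * μ (closedBall y ρ)) :
    m * ∫⁻ x in A, ‖u x‖ₑ ∂μ ≤ K * ∫⁻ x in T, ‖u x‖ₑ ∂μ +
      ENNReal.ofReal ρ * ∫⁻ x in cthickening ρ A, ‖fderiv ℝ u x‖ₑ ∂μ := by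
  set V := μ (closedBall (0 : E) ρ)
  have hV (x : E) : μ (closedBall x ρ) = V := Measure.addHaar_closedBall_center μ x ρ
  have hV0 : V ≠ 0 := (measure_closedBall_pos μ _ hρ).ne'
  have hVtop : V ≠ ⊤ := measure_closedBall_lt_top.ne
  have hum : Measurable fun x ↦ ‖u x‖ₑ := hu.continuous.measurable.enorm
  have hosc := measurable_setLIntegral_closedBall_enorm_sub (μ := μ) hu.continuous ρ
  rw [← ENNReal.mul_le_mul_iff_left hV0 hVtop]
  calc m * (∫⁻ x in A, ‖u x‖ₑ ∂μ) * V
      = ∫⁻ x in A, m * V * ‖u x‖ₑ ∂μ := by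
        rw [lintegral_const_mul _ hum]
        ring
    _ ≤ ∫⁻ x in A, ((∫⁻ y in T ∩ closedBall x ρ, ‖u y‖ₑ ∂μ) +
          ∫⁻ y in closedBall x ρ, ‖u y - u x‖ₑ ∂μ) ∂μ :=
        setLIntegral_mono' hA fun x hx ↦
          mul_enorm_le_setLIntegral_enorm_add_setLIntegral_enorm_sub hu.continuous.measurable
            Set.inter_subset_right x (hV x ▸ hm x hx)
    _ = (∫⁻ x in T, ‖u x‖ₑ * μ (A ∩ closedBall x ρ) ∂μ) +
          ∫⁻ x in A, ∫⁻ y in closedBall x ρ, ‖u y - u x‖ₑ ∂μ ∂μ := by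
        rw [lintegral_add_right _ hosc, setLIntegral_setLIntegral_inter_closedBall _ _ _ hum]
    _ ≤ (∫⁻ x in T, ‖u x‖ₑ * (K * V) ∂μ) +
          ENNReal.ofReal ρ * (∫⁻ x in cthickening ρ A, ‖fderiv ℝ u x‖ₑ ∂μ) * V := by
        refine add_le_add (setLIntegral_mono (hum.mul_const _) fun y hy ↦ ?_)
          (setLIntegral_setLIntegral_closedBall_enorm_sub_le hu A ρ)
        gcongr
        exact (hK y hy).trans_eq (by rw [hV])
    _ = _ := by
        rw [lintegral_mul_const _ hum]
        ring

end Poincare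

section LayerCake

lemma lintegral_Ioi_rpow_neg_sub_one {a b : ℝ} (ha : 0 < a) (hb : 0 ≤ b) :
    ∫⁻ r in Set.Ioi b, ENNReal.ofReal (r ^ (-a - 1)) =
      ENNReal.ofReal a⁻¹ * ENNReal.ofReal b ^ (-a) := by
  have hnonneg : ∀ᵐ r ∂volume.restrict (Set.Ioi b), 0 ≤ r ^ (-a - 1) := by
    filter_upwards [ae_restrict_mem measurableSet_Ioi] with r hr
    exact Real.rpow_nonneg (hb.trans (le_of_lt hr)) _
  rcases hb.eq_or_lt with rfl | hb
  · rw [ENNReal.ofReal_zero, ENNReal.zero_rpow_of_neg (neg_neg_of_pos ha),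
      ENNReal.mul_top (by simpa using ha)]
    by_contra hfin
    exact not_integrableOn_Ioi_rpow (-a - 1) ⟨(measurable_id.pow_const _).aestronglyMeasurable,
      (hasFiniteIntegral_iff_ofReal hnonneg).2 (lt_top_iff_ne_top.2 hfin)⟩
  · have hint := integrableOn_Ioi_rpow_of_lt (by linarith : -a - 1 < -1) hb
    rw [← ofReal_integral_eq_lintegral_ofReal hint hnonneg,
      integral_Ioi_rpow_of_lt (by linarith) hb, ENNReal.ofReal_rpow_of_pos hb,
      ← ENNReal.ofReal_mul (by positivity), sub_add_cancel]
    congr 1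
    field_simp

lemma setLIntegral_rpow_lt_ofReal_mul {a l : ℝ} (ha : 0 < a) (hl : 0 < l) (e : ℝ≥0∞) :
    ∫⁻ r in {r : ℝ | e < ENNReal.ofReal (l * r)}, ENNReal.ofReal (r ^ (-a - 1)) =
      ENNReal.ofReal (l ^ a / a) * e ^ (-a) := by
  induction e with
  | top => simp [ENNReal.top_rpow_of_neg (neg_neg_of_pos ha)]
  | coe e =>
    have hset : {r : ℝ | (e : ℝ≥0∞) < ENNReal.ofReal (l * r)} = Set.Ioi ((e : ℝ) / l) := by
      ext r
      rw [Set.mem_ofPred_eq, ENNReal.coe_lt_ofReal, Set.mem_Ioi, div_lt_iff₀' hl]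
    have hscale : ENNReal.ofReal (e / l) ^ (-a) = ENNReal.ofReal (l ^ a) * (e : ℝ≥0∞) ^ (-a) := by
      rw [ENNReal.ofReal_div_of_pos hl, ENNReal.ofReal_coe_nnreal, div_eq_mul_inv, mul_comm,
        ENNReal.mul_rpow_of_ne_top (by simpa using hl) coe_ne_top, ENNReal.inv_rpow,
        ENNReal.rpow_neg, inv_inv, ENNReal.ofReal_rpow_of_pos hl]
    rw [hset, lintegral_Ioi_rpow_neg_sub_one ha (by positivity), hscale, ← mul_assoc,
      ← ENNReal.ofReal_mul (by positivity), inv_mul_eq_div]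

lemma measurable_setLIntegral_thickening_mul {X : Type*} [PseudoEMetricSpace X]
    [MeasurableSpace X] {μ : Measure X} (E : Set X) (f : X → ℝ≥0∞) {l : ℝ} (hl : 0 ≤ l) :
    Measurable fun r : ℝ ↦ ∫⁻ x in thickening (l * r) E, f x ∂μ :=
  Monotone.measurable fun _ _ hr ↦ lintegral_mono_set (thickening_mono (by gcongr) _)

variable {X : Type*} [PseudoEMetricSpace X] [MeasurableSpace X] [OpensMeasurableSpace X]
  {μ : Measure X} [SFinite μ] {f g : X → ℝ≥0∞}

lemma lintegral_rpow_mul_setLIntegral_thickening (E : Set X) (hf : Measurable f) {a l : ℝ}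
    (ha : 0 < a) (hl : 0 < l) :
    ∫⁻ r in Set.Ioi (0 : ℝ),
        ENNReal.ofReal (r ^ (-a - 1)) * ∫⁻ x in thickening (l * r) E, f x ∂μ =
      ENNReal.ofReal (l ^ a / a) * ∫⁻ x, f x * infEDist x E ^ (-a) ∂μ := by
  let S : Set (ℝ × X) := {q | infEDist q.2 E < ENNReal.ofReal (l * q.1)}
  have hS : MeasurableSet S :=
    measurableSet_lt (measurable_infEDist.comp measurable_snd) (by fun_prop)
  have hw : Measurable fun r : ℝ ↦ ENNReal.ofReal (r ^ (-a - 1)) := by fun_prop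
  let k : ℝ × X → ℝ≥0∞ := S.indicator fun q ↦ ENNReal.ofReal (q.1 ^ (-a - 1)) * f q.2
  have hk : Measurable k := ((hw.comp measurable_fst).mul (hf.comp measurable_snd)).indicator hS
  have integral_fst (r : ℝ) : ENNReal.ofReal (r ^ (-a - 1)) * ∫⁻ x in thickening (l * r) E, f x ∂μ =
      ∫⁻ x, k (r, x) ∂μ := by
    rw [← lintegral_const_mul _ hf, ← lintegral_indicator isOpen_thickening.measurableSet]
    rfl
  have integral_snd (x : X) : ∫⁻ r in Set.Ioi (0 : ℝ), k (r, x) =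
      ENNReal.ofReal (l ^ a / a) * (f x * infEDist x E ^ (-a)) := by
    have hSx : MeasurableSet {r : ℝ | infEDist x E < ENNReal.ofReal (l * r)} :=
      measurable_prodMk_right hS
    have hpos : {r : ℝ | infEDist x E < ENNReal.ofReal (l * r)} ⊆ Set.Ioi 0 := fun r hr ↦
      pos_of_mul_pos_right (ENNReal.ofReal_pos.1 (bot_le.trans_lt hr)) hl.le
    calc ∫⁻ r in Set.Ioi (0 : ℝ), k (r, x)
        = ∫⁻ r in {r : ℝ | infEDist x E < ENNReal.ofReal (l * r)},
            ENNReal.ofReal (r ^ (-a - 1)) * f x := by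
          rw [← Set.inter_eq_left.2 hpos, ← Measure.restrict_restrict hSx,
            ← lintegral_indicator hSx]
          rfl
      _ = _ := by
          rw [lintegral_mul_const _ hw, setLIntegral_rpow_lt_ofReal_mul ha hl]
          ring
  simp_rw [integral_fst]
  rw [lintegral_lintegral_swap (f := fun r x ↦ k (r, x)) hk.aemeasurable]
  simp_rw [integral_snd]
  exact lintegral_const_mul _ (hf.mul (measurable_infEDist.pow_const _))

lemma le_two_mul_of_le_half_mul_add {a b : ℝ≥0∞} (ha : a ≠ ⊤) (h : a ≤ 2⁻¹ * a + b) :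
    a ≤ 2 * b := by
  have hhalf : 2⁻¹ * a ≤ b := by
    refine ENNReal.le_of_add_le_add_left (a := 2⁻¹ * a) (by finiteness) ?_
    rwa [← add_mul, ENNReal.inv_two_add_inv_two, one_mul]
  rwa [ENNReal.mul_le_iff_le_inv (by simp) (by simp), inv_inv] at hhalf

lemma lintegral_mul_infEDist_rpow_le_add_of_setLIntegral_thickening_le {E : Set X}
    (hf : Measurable f) (hg : Measurable g) {γ l m : ℝ} {K C : ℝ≥0∞} (hγ : 1 < γ) (hl : 0 < l)
    (hm : 0 < m)
    (hfg : ∀ r : ℝ, 0 < r → ∫⁻ x in thickening r E, f x ∂μ ≤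
      K * ∫⁻ x in thickening (l * r) E, f x ∂μ +
        C * ENNReal.ofReal r * ∫⁻ x in thickening (m * r) E, g x ∂μ) :
    ENNReal.ofReal γ⁻¹ * ∫⁻ x, f x * infEDist x E ^ (-γ) ∂μ ≤
      K * (ENNReal.ofReal (l ^ γ / γ) * ∫⁻ x, f x * infEDist x E ^ (-γ) ∂μ) +
        C * (ENNReal.ofReal (m ^ (γ - 1) / (γ - 1)) *
          ∫⁻ x, g x * infEDist x E ^ (1 - γ) ∂μ) := by
  have hγ0 : 0 < γ := by linarith
  have layer_one := lintegral_rpow_mul_setLIntegral_thickening (μ := μ) E hf hγ0 one_pos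
  have layer_l := lintegral_rpow_mul_setLIntegral_thickening (μ := μ) E hf hγ0 hl
  have layer_m := lintegral_rpow_mul_setLIntegral_thickening (μ := μ) E hg (sub_pos.2 hγ) hm
  have hmeas (a : ℝ) {k : ℝ} (hk : 0 < k) (h : X → ℝ≥0∞) : Measurable fun r : ℝ ↦
      ENNReal.ofReal (r ^ a) * ∫⁻ x in thickening (k * r) E, h x ∂μ :=
    (by fun_prop : Measurable fun r : ℝ ↦ ENNReal.ofReal (r ^ a)).mul
      (measurable_setLIntegral_thickening_mul E h hk.le)
  rw [Real.one_rpow, one_div] at layer_one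
  rw [neg_sub] at layer_m
  rw [← layer_one, ← layer_l, ← layer_m, ← lintegral_const_mul _ (hmeas _ hl f),
    ← lintegral_const_mul _ (hmeas _ hm g), ← lintegral_add_left ((hmeas _ hl f).const_mul _)]
  refine setLIntegral_mono' measurableSet_Ioi fun r (hr : 0 < r) ↦ ?_
  have hpow : ENNReal.ofReal (r ^ (1 - γ - 1)) =
      ENNReal.ofReal (r ^ (-γ - 1)) * ENNReal.ofReal r := by
    rw [← ENNReal.ofReal_mul (by positivity), ← Real.rpow_add_one hr.ne']
    ring_nf
  rw [one_mul, hpow]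
  calc _ ≤ _ := mul_le_mul_right (hfg r hr) _
    _ = _ := by ring

lemma lintegral_mul_infEDist_rpow_le_of_setLIntegral_thickening_le {E : Set X}
    (hf : Measurable f) (hg : Measurable g) {γ l m : ℝ} {K C : ℝ≥0∞} (hγ : 1 < γ) (hl : 0 < l)
    (hm : 0 < m) (hKl : K * ENNReal.ofReal (l ^ γ) ≤ 2⁻¹)
    (hfin : ∫⁻ x, f x * infEDist x E ^ (-γ) ∂μ ≠ ⊤)
    (hfg : ∀ r : ℝ, 0 < r → ∫⁻ x in thickening r E, f x ∂μ ≤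
      K * ∫⁻ x in thickening (l * r) E, f x ∂μ +
        C * ENNReal.ofReal r * ∫⁻ x in thickening (m * r) E, g x ∂μ) :
    ∫⁻ x, f x * infEDist x E ^ (-γ) ∂μ ≤
      2 * (ENNReal.ofReal γ * C * ENNReal.ofReal (m ^ (γ - 1) / (γ - 1))) *
        ∫⁻ x, g x * infEDist x E ^ (1 - γ) ∂μ := by
  have hγ0 : 0 < γ := by linarith
  have integrated :=
    lintegral_mul_infEDist_rpow_le_add_of_setLIntegral_thickening_le hf hg hγ hl hm hfg
  set I := ∫⁻ x, f x * infEDist x E ^ (-γ) ∂μ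
  set G := ∫⁻ x, g x * infEDist x E ^ (1 - γ) ∂μ
  have hγ_cancel : ENNReal.ofReal γ * ENNReal.ofReal γ⁻¹ = 1 := by
    rw [← ENNReal.ofReal_mul hγ0.le, mul_inv_cancel₀ hγ0.ne', ENNReal.ofReal_one]
  rw [mul_assoc 2]
  refine le_two_mul_of_le_half_mul_add hfin ?_
  calc I = ENNReal.ofReal γ * (ENNReal.ofReal γ⁻¹ * I) := by
        rw [← mul_assoc, hγ_cancel, one_mul]
    _ ≤ _ := mul_le_mul_right integrated _
    _ = K * ENNReal.ofReal (l ^ γ) * I * (ENNReal.ofReal γ * ENNReal.ofReal γ⁻¹) +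
          ENNReal.ofReal γ * C * ENNReal.ofReal (m ^ (γ - 1) / (γ - 1)) * G := by
        rw [div_eq_mul_inv (l ^ γ), ENNReal.ofReal_mul (by positivity)]
        ring
    _ ≤ _ := by
        rw [hγ_cancel, mul_one]
        gcongr

end LayerCake

section AssouadDef

variable {X : Type*} [PseudoMetricSpace X] [MeasurableSpace X]

/-- `E` is thick of codimension `s`, with constant `c`: at every point of `E` and all scales
`0 < r < R`, the `r`-neighborhood of `E` fills at least the proportion `c * (r / R) ^ s` of the
ball of radius `R`. This, for some `s < q` and `c > 0`, is how the upper Assouad codimension of `E`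
being less than `q` is encoded. -/
def IsAssouadThick (μ : Measure X) (E : Set X) (s c : ℝ) : Prop :=
  ∀ x ∈ E, ∀ r R : ℝ, 0 < r → r < R →
    ENNReal.ofReal (c * (r / R) ^ s) * μ (closedBall x R) ≤ μ (thickening r E ∩ closedBall x R)

/-- `E` is thin of codimension `t`, with constant `C`: at every point of `E` and all scales
`0 < r < R`, the `r`-neighborhood of `E` fills at most the proportion `C * (r / R) ^ t` of the
ball of radius `R`. This, for some `t > q` and `C`, is how the lower Assouad codimension of `E`
being greater than `q` is encoded. -/
def IsAssouadThin (μ : Measure X) (E : Set X) (t C : ℝ) : Prop :=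
  ∀ x ∈ E, ∀ r R : ℝ, 0 < r → r < R →
    μ (thickening r E ∩ closedBall x R) ≤ ENNReal.ofReal (C * (r / R) ^ t) * μ (closedBall x R)

end AssouadDef

section HardyL1

lemma exists_pos_lt_one_mul_rpow_le_half (K : ℝ) {a : ℝ} (ha : 0 < a) :
    ∃ l : ℝ, 0 < l ∧ l < 1 ∧ K * l ^ a ≤ 2⁻¹ := by
  have hlim : Filter.Tendsto (fun l : ℝ ↦ K * l ^ a) (nhdsWithin 0 (Set.Ioi 0)) (nhds 0) := by
    have := ((Real.continuous_rpow_const ha.le).const_mul K).tendsto 0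
    rw [Real.zero_rpow ha.ne', mul_zero] at this
    exact this.mono_left nhdsWithin_le_nhds
  obtain ⟨l, hl, h0, h1⟩ := ((hlim.eventually_le_const (by norm_num : (0 : ℝ) < 2⁻¹)).and
    (Ioo_mem_nhdsGT one_pos)).exists
  exact ⟨l, h0, h1, hl⟩

variable {E : Type*} [NormedAddCommGroup E] [NormedSpace ℝ E] [MeasurableSpace E] [BorelSpace E]
  [FiniteDimensional ℝ E] {μ : Measure E} [μ.IsAddHaarMeasure] {u : E → ℝ} {L : NNReal}
  {A F : Set E}

open Module (finrank)

lemma IsAssouadThick.mul_measure_closedBall_le {s c l R : ℝ} (hA : IsAssouadThick μ A s c)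
    (hl0 : 0 < l) (hl1 : l < 1) (hR : 0 < R) {x : E} (hx : x ∈ thickening R A) :
    ENNReal.ofReal (c * l ^ s / 2 ^ finrank ℝ E) * μ (closedBall x (2 * R)) ≤
      μ (thickening (l * R) A ∩ closedBall x (2 * R)) := by
  obtain ⟨a, ha, hxa⟩ := mem_thickening_iff.1 hx
  have hball : closedBall a R ⊆ closedBall x (2 * R) :=
    closedBall_subset_closedBall' (by rw [dist_comm]; linarith)
  calc ENNReal.ofReal (c * l ^ s / 2 ^ finrank ℝ E) * μ (closedBall x (2 * R))
      = ENNReal.ofReal (c * (l * R / R) ^ s) * μ (closedBall a R) := by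
        rw [Measure.addHaar_closedBall_mul_of_pos μ x two_pos, ← mul_assoc,
          ← ENNReal.ofReal_mul' (by positivity), div_mul_cancel₀ _ (by positivity),
          mul_div_cancel_right₀ _ hR.ne', Measure.addHaar_closedBall_center μ a]
    _ ≤ μ (thickening (l * R) A ∩ closedBall a R) :=
        hA a ha _ _ (by positivity) (mul_lt_of_lt_one_left hR hl1)
    _ ≤ _ := measure_mono (Set.inter_subset_inter_right _ hball)

lemma IsAssouadThick.setLIntegral_thickening_enorm_le {s c l R : ℝ} (hA : IsAssouadThick μ A s c)
    (hc : 0 < c) (hl0 : 0 < l) (hl1 : l < 1) (hR : 0 < R) (hu : LipschitzWith L u) :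
    ∫⁻ x in thickening R A, ‖u x‖ₑ ∂μ ≤
      ENNReal.ofReal (2 ^ finrank ℝ E / (c * l ^ s)) * ∫⁻ x in thickening (l * R) A, ‖u x‖ₑ ∂μ +
        ENNReal.ofReal (2 ^ finrank ℝ E / (c * l ^ s)) * 2 * ENNReal.ofReal R *
          ∫⁻ x in thickening (4 * R) A, ‖fderiv ℝ u x‖ₑ ∂μ := by
  have hm : 0 < c * l ^ s / 2 ^ finrank ℝ E := by positivity
  have hpoincare := mul_setLIntegral_enorm_le_add_setLIntegral_enorm_fderiv (μ := μ) (K := 1) hu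
    isOpen_thickening.measurableSet (by positivity)
    (fun x ↦ hA.mul_measure_closedBall_le hl0 hl1 hR)
    (fun y (_ : y ∈ thickening (l * R) A) ↦ by
      rw [one_mul]
      exact measure_mono Set.inter_subset_right)
  have hnhd : cthickening (2 * R) (thickening R A) ⊆ thickening (4 * R) A :=
    (cthickening_thickening_subset (by positivity) _ _).trans
      (cthickening_subset_thickening' (by positivity) (by linarith) _)
  rw [ENNReal.mul_le_iff_le_inv (by simpa using hm) ENNReal.ofReal_ne_top,
    ← ENNReal.ofReal_inv_of_pos hm, inv_div] at hpoincare
  refine hpoincare.trans ?_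
  rw [ENNReal.ofReal_mul zero_le_two, ENNReal.ofReal_ofNat, one_mul, mul_add, mul_assoc _ 2,
    mul_assoc _ (2 * _)]
  gcongr

lemma IsAssouadThick.exists_lintegral_enorm_mul_infEDist_rpow_le {s c γ : ℝ}
    (hA : IsAssouadThick μ A s c) (hc : 0 < c) (hγ : 1 < γ) (hs : s < γ) :
    ∃ C : ℝ≥0∞, C ≠ ⊤ ∧ ∀ (u : E → ℝ) (L : NNReal), LipschitzWith L u →
      ∫⁻ x, ‖u x‖ₑ * infEDist x A ^ (-γ) ∂μ ≠ ⊤ →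
      ∫⁻ x, ‖u x‖ₑ * infEDist x A ^ (-γ) ∂μ ≤
        C * ∫⁻ x, ‖fderiv ℝ u x‖ₑ * infEDist x A ^ (1 - γ) ∂μ := by
  obtain ⟨l, hl0, hl1, hl⟩ :=
    exists_pos_lt_one_mul_rpow_le_half (2 ^ finrank ℝ E / c) (sub_pos.2 hs)
  have hhalf : ENNReal.ofReal (2 ^ finrank ℝ E / (c * l ^ s)) * ENNReal.ofReal (l ^ γ) ≤ 2⁻¹ := by
    rw [← ENNReal.ofReal_ofNat, ← ENNReal.ofReal_inv_of_pos two_pos,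
      ← ENNReal.ofReal_mul (by positivity)]
    refine ENNReal.ofReal_le_ofReal (le_of_eq_of_le ?_ hl)
    rw [Real.rpow_sub hl0]
    field_simp
  refine ⟨_, ?_, fun u L hu hfin ↦
    lintegral_mul_infEDist_rpow_le_of_setLIntegral_thickening_le hu.continuous.measurable.enorm
      (measurable_fderiv ℝ u).enorm hγ hl0 four_pos hhalf hfin fun R hR ↦
        hA.setLIntegral_thickening_enorm_le hc hl0 hl1 hR hu⟩
  finiteness

lemma IsAssouadThin.measure_thickening_inter_closedBall_le {t C l R : ℝ}
    (hF : IsAssouadThin μ F t C) (hl0 : 0 < l) (hl1 : l < 1) (hR : 0 < R) {y : E}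
    (hy : y ∈ thickening (2 * R) F) :
    μ (thickening (l * R) F ∩ closedBall y R) ≤
      ENNReal.ofReal (C * l ^ t * 3 ^ finrank ℝ E) * μ (closedBall y R) := by
  obtain ⟨a, ha, hya⟩ := mem_thickening_iff.1 hy
  have hball : closedBall y R ⊆ closedBall a (3 * R) := closedBall_subset_closedBall' (by linarith)
  have hnhd : l * R ≤ l * (3 * R) := by nlinarith
  calc μ (thickening (l * R) F ∩ closedBall y R)
      ≤ μ (thickening (l * (3 * R)) F ∩ closedBall a (3 * R)) :=
        measure_mono (Set.inter_subset_inter (thickening_mono hnhd _) hball)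
    _ ≤ ENNReal.ofReal (C * (l * (3 * R) / (3 * R)) ^ t) * μ (closedBall a (3 * R)) :=
        hF a ha _ _ (by positivity) (mul_lt_of_lt_one_left (by positivity) hl1)
    _ = _ := by
        rw [mul_div_cancel_right₀ _ (by positivity),
          Measure.addHaar_closedBall_mul_of_pos μ a three_pos, ← mul_assoc,
          ← ENNReal.ofReal_mul' (by positivity), Measure.addHaar_closedBall_center μ y]

lemma IsAssouadThin.setLIntegral_thickening_enorm_le {t C l R : ℝ} (hF : IsAssouadThin μ F t C)
    (hl0 : 0 < l) (hl1 : l < 1) (hR : 0 < R) (hu : LipschitzWith L u) :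
    ∫⁻ x in thickening (l * R) F, ‖u x‖ₑ ∂μ ≤
      ENNReal.ofReal (C * l ^ t * 3 ^ finrank ℝ E) * ∫⁻ x in thickening (2 * R) F, ‖u x‖ₑ ∂μ +
        ENNReal.ofReal R * ∫⁻ x in thickening (2 * R) F, ‖fderiv ℝ u x‖ₑ ∂μ := by
  have hlR : l * R < R := mul_lt_of_lt_one_left hR hl1
  have hnhd : cthickening R (thickening (l * R) F) ⊆ thickening (2 * R) F :=
    (cthickening_thickening_subset hR.le _ _).trans
      (cthickening_subset_thickening' (by positivity) (by linarith) _)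
  have hball (x : E) (hx : x ∈ thickening (l * R) F) : closedBall x R ⊆ thickening (2 * R) F :=
    (closedBall_subset_cthickening hx R).trans hnhd
  have hpoincare := mul_setLIntegral_enorm_le_add_setLIntegral_enorm_fderiv (μ := μ) (m := 1) hu
    isOpen_thickening.measurableSet hR
    (fun x hx ↦ by rw [one_mul, Set.inter_eq_right.2 (hball x hx)])
    (fun y ↦ hF.measure_thickening_inter_closedBall_le hl0 hl1 hR)
  rw [one_mul] at hpoincare
  exact hpoincare.trans (by gcongr)

lemma IsAssouadThin.exists_lintegral_enorm_mul_infEDist_rpow_le {t C γ : ℝ}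
    (hF : IsAssouadThin μ F t C) (hγ : 1 < γ) (ht : γ < t) :
    ∃ D : ℝ≥0∞, D ≠ ⊤ ∧ ∀ (u : E → ℝ) (L : NNReal), LipschitzWith L u →
      ∫⁻ x, ‖u x‖ₑ * infEDist x F ^ (-γ) ∂μ ≠ ⊤ →
      ∫⁻ x, ‖u x‖ₑ * infEDist x F ^ (-γ) ∂μ ≤
        D * ∫⁻ x, ‖fderiv ℝ u x‖ₑ * infEDist x F ^ (1 - γ) ∂μ := by
  obtain ⟨l, hl0, hl1, hl⟩ :=
    exists_pos_lt_one_mul_rpow_le_half (C * 3 ^ finrank ℝ E * 2 ^ γ) (sub_pos.2 ht)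
  have hhalf : ENNReal.ofReal (C * l ^ t * 3 ^ finrank ℝ E) * ENNReal.ofReal ((2 * l⁻¹) ^ γ) ≤
      2⁻¹ := by
    rw [← ENNReal.ofReal_ofNat, ← ENNReal.ofReal_inv_of_pos two_pos,
      ← ENNReal.ofReal_mul' (by positivity)]
    refine ENNReal.ofReal_le_ofReal (le_of_eq_of_le ?_ hl)
    rw [Real.rpow_sub hl0, Real.mul_rpow two_pos.le (by positivity), Real.inv_rpow hl0.le]
    ring
  refine ⟨_, ?_, fun u L hu hfin ↦
    lintegral_mul_infEDist_rpow_le_of_setLIntegral_thickening_le (l := 2 * l⁻¹) (m := 2 * l⁻¹)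
      (C := ENNReal.ofReal l⁻¹) hu.continuous.measurable.enorm
      (measurable_fderiv ℝ u).enorm hγ (by positivity) (by positivity) hhalf hfin fun r hr ↦ ?_⟩
  · finiteness
  · have hscale := hF.setLIntegral_thickening_enorm_le hl0 hl1 (R := l⁻¹ * r) (by positivity) hu
    rwa [mul_inv_cancel_left₀ hl0.ne', ← mul_assoc,
      ENNReal.ofReal_mul (inv_nonneg.2 hl0.le)] at hscale

end HardyL1

section Finiteness

lemma lintegral_enorm_mul_ne_top_of_hasCompactSupport {X : Type*} [TopologicalSpace X]
    [MeasurableSpace X] {μ : Measure X} {v : X → ℝ} (hv : Continuous v)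
    (hvc : HasCompactSupport v) {w : X → ℝ≥0∞} (hw : ∫⁻ x in tsupport v, w x ∂μ ≠ ⊤) :
    ∫⁻ x, ‖v x‖ₑ * w x ∂μ ≠ ⊤ := by
  obtain ⟨B, hB⟩ := hvc.exists_bound_of_continuous hv
  have hsupp : Function.support (fun x ↦ ‖v x‖ₑ * w x) ⊆ tsupport v := fun x hx ↦
    subset_tsupport v fun hvx ↦ hx (by simp [hvx])
  rw [← setLIntegral_eq_of_support_subset hsupp]
  refine ne_top_of_le_ne_top (ENNReal.mul_ne_top (ofReal_ne_top (r := B)) hw) ?_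
  rw [← lintegral_const_mul' _ _ ofReal_ne_top]
  gcongr with x
  rw [← ofReal_norm]
  exact ENNReal.ofReal_le_ofReal (hB x)

lemma ennreal_rpow_le_rpow_of_nonpos {b c : ℝ≥0∞} {y : ℝ} (hy : y ≤ 0) (hbc : b ≤ c) :
    c ^ y ≤ b ^ y := by
  rw [← neg_neg y, ENNReal.rpow_neg, ENNReal.rpow_neg b]
  exact ENNReal.inv_le_inv.2 (ENNReal.rpow_le_rpow hbc (by linarith))

variable {X : Type*} [PseudoMetricSpace X] [MeasurableSpace X] {μ : Measure X}
  [IsFiniteMeasureOnCompacts μ] {A F : Set X} {v : X → ℝ}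

lemma lintegral_enorm_mul_infEDist_rpow_ne_top_of_disjoint (hA : IsClosed A) {γ : ℝ} (hγ : 0 ≤ γ)
    (hv : Continuous v) (hvc : HasCompactSupport v) (hvA : Disjoint (tsupport v) A) :
    ∫⁻ x, ‖v x‖ₑ * infEDist x A ^ (-γ) ∂μ ≠ ⊤ := by
  obtain ⟨δ, hδ, hdist⟩ := exists_pos_forall_lt_edist hvc.isCompact hA hvA
  have hδ_top : (δ : ℝ≥0∞) ^ (-γ) ≠ ⊤ := by simp [ENNReal.rpow_eq_top_iff, hδ.ne']
  have htsupport : μ (tsupport v) ≠ ⊤ := hvc.isCompact.measure_lt_top.ne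
  refine lintegral_enorm_mul_ne_top_of_hasCompactSupport hv hvc
    (ne_top_of_le_ne_top (ENNReal.mul_ne_top hδ_top htsupport) ?_)
  rw [← setLIntegral_const]
  refine setLIntegral_mono measurable_const fun x hx ↦ ?_
  exact ennreal_rpow_le_rpow_of_nonpos (by linarith) (le_infEDist.2 fun y hy ↦ (hdist x hx y hy).le)

variable [ProperSpace X]

lemma IsAssouadThin.setLIntegral_Ioo_rpow_mul_measure_ne_top {t C γ R : ℝ}
    (hF : IsAssouadThin μ F t C) (ht : γ < t) {a : X} (ha : a ∈ F) :
    ∫⁻ r in Set.Ioo 0 R,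
      ENNReal.ofReal (r ^ (-γ - 1)) * μ (thickening r F ∩ closedBall a R) ≠ ⊤ := by
  rcases le_or_gt R 0 with hR | hR
  · simp [Set.Ioo_eq_empty_of_le hR]
  have hint : IntegrableOn (fun r : ℝ ↦ r ^ (t - γ - 1)) (Set.Ioo 0 R) :=
    (intervalIntegral.intervalIntegrable_rpow' (by linarith)).1.mono_set Set.Ioo_subset_Ioc_self
  have hV : μ (closedBall a R) ≠ ⊤ := measure_closedBall_lt_top.ne
  refine ne_top_of_le_ne_top (ENNReal.mul_ne_top hint.lintegral_lt_top.ne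
    (ENNReal.mul_ne_top (ofReal_ne_top (r := C / R ^ t)) hV)) ?_
  rw [← lintegral_mul_const _ (by fun_prop)]
  refine setLIntegral_mono' measurableSet_Ioo fun r ⟨hr, hrR⟩ ↦ ?_
  calc ENNReal.ofReal (r ^ (-γ - 1)) * μ (thickening r F ∩ closedBall a R)
      ≤ ENNReal.ofReal (r ^ (-γ - 1)) *
          (ENNReal.ofReal (C * (r / R) ^ t) * μ (closedBall a R)) := by
        gcongr
        exact hF a ha r R hr hrR
    _ = _ := by
        rw [← mul_assoc, ← mul_assoc, ← ENNReal.ofReal_mul (by positivity),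
          ← ENNReal.ofReal_mul (by positivity), Real.div_rpow hr.le hR.le,
          show t - γ - 1 = -γ - 1 + t by ring, Real.rpow_add hr]
        ring_nf

variable [OpensMeasurableSpace X]

lemma IsAssouadThin.setLIntegral_closedBall_infEDist_rpow_ne_top {t C γ : ℝ}
    (hF : IsAssouadThin μ F t C) (hγ : 0 < γ) (ht : γ < t) {a : X} (ha : a ∈ F) {R : ℝ}
    (hR : 0 < R) : ∫⁻ x in closedBall a R, infEDist x F ^ (-γ) ∂μ ≠ ⊤ := by
  have layer := lintegral_rpow_mul_setLIntegral_thickening (μ := μ.restrict (closedBall a R)) F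
    measurable_one hγ one_pos
  simp only [Pi.one_apply, one_mul, setLIntegral_one, Real.one_rpow,
    Measure.restrict_apply isOpen_thickening.measurableSet] at layer
  have large_scales : ∫⁻ r in Set.Ici R,
      ENNReal.ofReal (r ^ (-γ - 1)) * μ (thickening r F ∩ closedBall a R) ≠ ⊤ := by
    have hpow : ENNReal.ofReal R ^ (-γ) ≠ ⊤ := by
      rw [ENNReal.ofReal_rpow_of_pos hR]
      exact ofReal_ne_top
    have hV : μ (closedBall a R) ≠ ⊤ := measure_closedBall_lt_top.ne
    refine ne_top_of_le_ne_top
      (ENNReal.mul_ne_top (ENNReal.mul_ne_top (ofReal_ne_top (r := γ⁻¹)) hpow) hV) ?_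
    rw [← lintegral_Ioi_rpow_neg_sub_one hγ hR.le, ← lintegral_mul_const _ (by fun_prop),
      setLIntegral_congr Ioi_ae_eq_Ici.symm]
    gcongr
    exact Set.inter_subset_right
  have hfin : ∫⁻ r in Set.Ioi (0 : ℝ),
      ENNReal.ofReal (r ^ (-γ - 1)) * μ (thickening r F ∩ closedBall a R) ≠ ⊤ := by
    refine ne_top_of_le_ne_top (ENNReal.add_ne_top.2
      ⟨hF.setLIntegral_Ioo_rpow_mul_measure_ne_top ht ha (R := R), large_scales⟩) ?_
    refine (lintegral_mono_set fun r (hr : 0 < r) ↦ ?_).trans (lintegral_union_le _ _ _)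
    exact (lt_or_ge r R).imp (fun h ↦ ⟨hr, h⟩) id
  intro htop
  rw [layer, htop, ENNReal.mul_top (by simpa using hγ)] at hfin
  exact hfin rfl

lemma IsAssouadThin.measure_eq_zero {t C : ℝ} (hF : IsAssouadThin μ F t C) (ht : 0 < t) :
    μ F = 0 := by
  refine measure_null_of_locally_null F fun a ha ↦
    ⟨_, inter_mem_nhdsWithin F (closedBall_mem_nhds a one_pos), ?_⟩
  have hfin := hF.setLIntegral_closedBall_infEDist_rpow_ne_top (half_pos ht) (half_lt_self ht) ha
    one_pos
  have hnull :=
    measure_eq_top_of_lintegral_ne_top (measurable_infEDist.pow_const _).aemeasurable hfin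
  rw [Measure.restrict_apply_eq_zero' measurableSet_closedBall] at hnull
  refine measure_mono_null (Set.inter_subset_inter_left _ fun x hx ↦ ?_) hnull
  rw [Set.mem_ofPred_eq, infEDist_zero_of_mem hx, ENNReal.zero_rpow_of_neg (by linarith)]

lemma IsAssouadThin.lintegral_enorm_mul_infEDist_rpow_ne_top {t C γ : ℝ}
    (hF : IsAssouadThin μ F t C) (hγ : 0 < γ) (ht : γ < t) (hv : Continuous v)
    (hvc : HasCompactSupport v) : ∫⁻ x, ‖v x‖ₑ * infEDist x F ^ (-γ) ∂μ ≠ ⊤ := by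
  refine lintegral_enorm_mul_ne_top_of_hasCompactSupport hv hvc ?_
  rcases F.eq_empty_or_nonempty with rfl | ⟨a, ha⟩
  · simp [ENNReal.top_rpow_of_neg (neg_neg_of_pos hγ)]
  · obtain ⟨R, hR, hsupp⟩ := hvc.isCompact.isBounded.subset_closedBall_lt 0 a
    exact ne_top_of_le_ne_top (hF.setLIntegral_closedBall_infEDist_rpow_ne_top hγ ht ha hR)
      (lintegral_mono_set hsupp)

end Finiteness

section Union

lemma infEDist_union_rpow_le_add {X : Type*} [PseudoEMetricSpace X] (x : X) (A F : Set X) (y : ℝ) :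
    infEDist x (A ∪ F) ^ y ≤ infEDist x A ^ y + infEDist x F ^ y := by
  rw [infEDist_union]
  rcases min_choice (infEDist x A) (infEDist x F) with h | h <;> rw [h]
  exacts [le_self_add, le_add_self]

lemma setLIntegral_mul_infEDist_union_rpow_le_add {X : Type*} [PseudoEMetricSpace X]
    [MeasurableSpace X] [OpensMeasurableSpace X] {μ : Measure X} {f : X → ℝ≥0∞}
    (hf : Measurable f) (S A F : Set X) (y : ℝ) :
    ∫⁻ x in S, f x * infEDist x (A ∪ F) ^ y ∂μ ≤
      (∫⁻ x, f x * infEDist x A ^ y ∂μ) + ∫⁻ x, f x * infEDist x F ^ y ∂μ := by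
  have hmeas : Measurable fun x ↦ f x * infEDist x A ^ y := hf.mul (measurable_infEDist.pow_const _)
  rw [← lintegral_add_left hmeas]
  refine (setLIntegral_le_lintegral _ _).trans (lintegral_mono fun x ↦ ?_)
  rw [← mul_add]
  exact mul_le_mul_right (infEDist_union_rpow_le_add x A F y) _

variable {E : Type*} [NormedAddCommGroup E] [NormedSpace ℝ E] [MeasurableSpace E] [BorelSpace E]
  {μ : Measure E} {A F : Set E}

lemma lintegral_enorm_fderiv_mul_eq_setLIntegral_compl_union (hA : IsClosed A) (hF : IsClosed F)
    (hF0 : μ F = 0) {v : E → ℝ} (hvA : Disjoint (tsupport v) A) (w : E → ℝ≥0∞) :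
    ∫⁻ x, ‖fderiv ℝ v x‖ₑ * w x ∂μ = ∫⁻ x in (A ∪ F)ᶜ, ‖fderiv ℝ v x‖ₑ * w x ∂μ := by
  rw [← lintegral_indicator (hA.union hF).measurableSet.compl]
  refine lintegral_congr_ae ?_
  filter_upwards [measure_eq_zero_iff_ae_notMem.1 hF0] with x hxF
  by_cases hxA : x ∈ A
  · have hfderiv : fderiv ℝ v x = 0 := by
      by_contra h
      exact Set.disjoint_right.1 hvA hxA (support_fderiv_subset ℝ h)
    have henorm : ‖fderiv ℝ v x‖ₑ = 0 := by
      rw [← ofReal_norm, hfderiv, norm_zero, ofReal_zero]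
    simp [henorm, hxA]
  · have hx : x ∈ (A ∪ F)ᶜ := by simp [hxA, hxF]
    rw [Set.indicator_of_mem hx]

variable [FiniteDimensional ℝ E] [μ.IsAddHaarMeasure]

lemma exists_setLIntegral_enorm_mul_infEDist_union_rpow_le {γ s c t C : ℝ} (hA : IsClosed A)
    (hthick : IsAssouadThick μ A s c) (hc : 0 < c) (hF : IsClosed F)
    (hthin : IsAssouadThin μ F t C) (hγ : 1 < γ) (hs : s < γ) (ht : γ < t) :
    ∃ D : ℝ≥0∞, D ≠ ⊤ ∧ ∀ (v : E → ℝ) (L : NNReal), LipschitzWith L v → HasCompactSupport v →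
      Disjoint (tsupport v) A →
      ∫⁻ x in (A ∪ F)ᶜ, ‖v x‖ₑ * infEDist x (A ∪ F) ^ (-γ) ∂μ ≠ ⊤ ∧
      ∫⁻ x in (A ∪ F)ᶜ, ‖v x‖ₑ * infEDist x (A ∪ F) ^ (-γ) ∂μ ≤
        D * ∫⁻ x in (A ∪ F)ᶜ, ‖fderiv ℝ v x‖ₑ * infEDist x (A ∪ F) ^ (1 - γ) ∂μ := by
  obtain ⟨C₁, hC₁, hardyA⟩ := hthick.exists_lintegral_enorm_mul_infEDist_rpow_le hc hγ hs
  obtain ⟨C₂, hC₂, hardyF⟩ := hthin.exists_lintegral_enorm_mul_infEDist_rpow_le hγ ht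
  refine ⟨C₁ + C₂, ENNReal.add_ne_top.2 ⟨hC₁, hC₂⟩, fun v L hv hvc hvA ↦ ?_⟩
  have finA : ∫⁻ x, ‖v x‖ₑ * infEDist x A ^ (-γ) ∂μ ≠ ⊤ :=
    lintegral_enorm_mul_infEDist_rpow_ne_top_of_disjoint hA (by linarith) hv.continuous hvc hvA
  have finF := hthin.lintegral_enorm_mul_infEDist_rpow_ne_top (by linarith) ht hv.continuous hvc
  have hsplit := setLIntegral_mul_infEDist_union_rpow_le_add (μ := μ)
    hv.continuous.measurable.enorm (A ∪ F)ᶜ A F (-γ)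
  have gradient_le {S : Set E} (hS : S ⊆ A ∪ F) :
      ∫⁻ x, ‖fderiv ℝ v x‖ₑ * infEDist x S ^ (1 - γ) ∂μ ≤
        ∫⁻ x in (A ∪ F)ᶜ, ‖fderiv ℝ v x‖ₑ * infEDist x (A ∪ F) ^ (1 - γ) ∂μ := by
    rw [lintegral_enorm_fderiv_mul_eq_setLIntegral_compl_union hA hF
      (hthin.measure_eq_zero (by linarith)) hvA]
    exact lintegral_mono fun x ↦ mul_le_mul_right
      (ennreal_rpow_le_rpow_of_nonpos (by linarith) (infEDist_anti hS)) _
  refine ⟨ne_top_of_le_ne_top (ENNReal.add_ne_top.2 ⟨finA, finF⟩) hsplit, hsplit.trans ?_⟩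
  rw [add_mul]
  exact add_le_add
    ((hardyA v L hv finA).trans (mul_le_mul_right (gradient_le Set.subset_union_left) _))
    ((hardyF v L hv finF).trans (mul_le_mul_right (gradient_le Set.subset_union_right) _))

end Union

section Power

variable {p : ℝ}

lemma exists_lipschitzWith_abs_rpow {X : Type*} [PseudoMetricSpace X] {u : X → ℝ} {L : NNReal}
    {B : ℝ} (hp : 1 ≤ p) (hu : LipschitzWith L u) (hB : ∀ x, ‖u x‖ ≤ B) :
    ∃ L' : NNReal, LipschitzWith L' fun x ↦ |u x| ^ p := by
  rcases hp.eq_or_lt with rfl | hp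
  · simpa only [Real.rpow_one] using ⟨_, lipschitzWith_one_norm.comp hu⟩
  · obtain ⟨K, hK⟩ := (contDiff_norm_rpow (E := ℝ) hp).contDiffOn.exists_lipschitzOnWith
      one_ne_zero (convex_closedBall 0 B) (isCompact_closedBall 0 B)
    refine ⟨K * L, lipschitzOnWith_univ.1 (hK.comp hu.lipschitzOnWith fun x _ ↦ ?_)⟩
    simpa using hB x

lemma tsupport_abs_rpow_subset {X : Type*} [TopologicalSpace X] (u : X → ℝ) (hp : p ≠ 0) :
    tsupport (fun x ↦ |u x| ^ p) ⊆ tsupport u := by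
  refine closure_mono fun x hx hux ↦ hx ?_
  simp only [hux, abs_zero, Real.zero_rpow hp]

lemma enorm_abs_rpow (hp : 0 ≤ p) (a : ℝ) : ‖|a| ^ p‖ₑ = ‖a‖ₑ ^ p := by
  rw [Real.enorm_rpow_of_nonneg (abs_nonneg a) hp, Real.enorm_abs]

lemma le_rpow_mul_of_le_mul_rpow_mul_rpow {X Y D : ℝ≥0∞} (hp : 0 < p) (hX : X ≠ ⊤)
    (h : X ≤ D * (X ^ (1 - 1 / p) * Y ^ (1 / p))) : X ≤ D ^ p * Y := by
  rcases eq_or_ne X 0 with rfl | hX0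
  · exact zero_le
  have hpow0 : X ^ (1 - 1 / p) ≠ 0 := by simp [ENNReal.rpow_eq_zero_iff, hX0, hX]
  have hroot : X ^ (1 / p) ≤ D * Y ^ (1 / p) := by
    rw [← ENNReal.mul_le_mul_iff_right hpow0 (ENNReal.rpow_ne_top_of_ne_zero hX0 hX),
      ← ENNReal.rpow_add _ _ hX0 hX, sub_add_cancel, ENNReal.rpow_one, mul_left_comm]
    exact h
  simpa [ENNReal.mul_rpow_of_nonneg _ _ hp.le, ← ENNReal.rpow_mul, hp.ne'] using
    ENNReal.rpow_le_rpow hroot hp.le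

variable {E : Type*} [NormedAddCommGroup E] [NormedSpace ℝ E] {u : E → ℝ}

lemma enorm_fderiv_abs_rpow_le (hp : 1 ≤ p) {x : E} (hx : DifferentiableAt ℝ u x) :
    ‖fderiv ℝ (fun x ↦ |u x| ^ p) x‖ₑ ≤
      ENNReal.ofReal p * (‖u x‖ₑ ^ (p - 1) * ‖fderiv ℝ u x‖ₑ) := by
  have hp0 : 0 < p := by linarith
  rcases eq_or_ne (u x) 0 with hux | hux
  · have hmin : IsLocalMin (fun x ↦ |u x| ^ p) x := .of_forall fun y ↦ by
      simp only [hux, abs_zero, Real.zero_rpow hp0.ne']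
      positivity
    rw [hmin.fderiv_eq_zero, ← ofReal_norm (0 : E →L[ℝ] ℝ), norm_zero, ofReal_zero]
    exact zero_le
  · have hsign : ‖(SignType.sign (u x) : ℝ)‖ₑ = 1 := by
      rcases hux.lt_or_gt with h | h <;> simp [h]
    have hderiv : HasFDerivAt (fun x ↦ |u x| ^ p) _ x :=
      ((hasDerivAt_abs hux).rpow_const (.inl (abs_ne_zero.2 hux))).comp_hasFDerivAt x hx.hasFDerivAt
    rw [hderiv.fderiv, enorm_smul, enorm_mul, enorm_mul, hsign, one_mul,
      enorm_abs_rpow (by linarith), Real.enorm_of_nonneg hp0.le, mul_assoc]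

variable [MeasurableSpace E] [BorelSpace E] [FiniteDimensional ℝ E] {μ : Measure E}
  [μ.IsAddHaarMeasure]

lemma setLIntegral_enorm_fderiv_abs_rpow_mul_le {L : NNReal} (hp : 1 ≤ p)
    (hu : LipschitzWith L u) {Ω : Set E} (hΩ : MeasurableSet Ω) {W : E → ℝ≥0∞} (hW : Measurable W)
    (hW0 : ∀ x ∈ Ω, W x ≠ 0) (hWtop : ∀ x ∈ Ω, W x ≠ ⊤) (γ : ℝ) :
    ∫⁻ x in Ω, ‖fderiv ℝ (fun x ↦ |u x| ^ p) x‖ₑ * W x ^ (1 - γ) ∂μ ≤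
      ENNReal.ofReal p * ((∫⁻ x in Ω, ‖u x‖ₑ ^ p * W x ^ (-γ) ∂μ) ^ (1 - 1 / p) *
        (∫⁻ x in Ω, ‖fderiv ℝ u x‖ₑ ^ p * W x ^ (p - γ) ∂μ) ^ (1 / p)) := by
  have hp0 : 0 < p := by linarith
  have hp1 : 1 / p ≤ 1 := (div_le_one hp0).2 hp
  have hf : Measurable fun x ↦ ‖u x‖ₑ ^ p * W x ^ (-γ) :=
    (hu.continuous.measurable.enorm.pow_const _).mul (hW.pow_const _)
  have hg : Measurable fun x ↦ ‖fderiv ℝ u x‖ₑ ^ p * W x ^ (p - γ) :=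
    ((measurable_fderiv ℝ u).enorm.pow_const _).mul (hW.pow_const _)
  have hfactor {x : E} (hx : x ∈ Ω) : ‖u x‖ₑ ^ (p - 1) * ‖fderiv ℝ u x‖ₑ * W x ^ (1 - γ) =
      (‖u x‖ₑ ^ p * W x ^ (-γ)) ^ (1 - 1 / p) *
        (‖fderiv ℝ u x‖ₑ ^ p * W x ^ (p - γ)) ^ (1 / p) := by
    have hexp_u : p * (1 - 1 / p) = p - 1 := by field_simp
    have hexp_W : -γ * (1 - 1 / p) + (p - γ) * (1 / p) = 1 - γ := by field_simp; ring
    rw [ENNReal.mul_rpow_of_nonneg _ _ (by linarith),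
      ENNReal.mul_rpow_of_nonneg _ _ (by positivity), ← ENNReal.rpow_mul, ← ENNReal.rpow_mul,
      ← ENNReal.rpow_mul, ← ENNReal.rpow_mul, mul_one_div_cancel hp0.ne', ENNReal.rpow_one,
      mul_mul_mul_comm, ← ENNReal.rpow_add _ _ (hW0 x hx) (hWtop x hx), hexp_u, hexp_W]
  calc ∫⁻ x in Ω, ‖fderiv ℝ (fun x ↦ |u x| ^ p) x‖ₑ * W x ^ (1 - γ) ∂μ
      ≤ ∫⁻ x in Ω, ENNReal.ofReal p * ((‖u x‖ₑ ^ p * W x ^ (-γ)) ^ (1 - 1 / p) *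
          (‖fderiv ℝ u x‖ₑ ^ p * W x ^ (p - γ)) ^ (1 / p)) ∂μ := by
        refine setLIntegral_mono_ae' hΩ ?_
        filter_upwards [hu.ae_differentiableAt (μ := μ)] with x hx hxΩ
        rw [← hfactor hxΩ, ← mul_assoc]
        exact mul_le_mul_left (enorm_fderiv_abs_rpow_le hp hx) _
    _ ≤ _ := by
        rw [lintegral_const_mul' _ _ ofReal_ne_top]
        exact mul_le_mul_right (ENNReal.lintegral_mul_norm_pow_le hf.aemeasurable hg.aemeasurable
          (by linarith) (by positivity) (by ring)) _

lemma exists_setLIntegral_enorm_rpow_mul_infEDist_union_rpow_le {A F : Set E} {γ s c t C : ℝ}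
    (hA : IsClosed A) (hthick : IsAssouadThick μ A s c) (hc : 0 < c) (hF : IsClosed F)
    (hthin : IsAssouadThin μ F t C) (hAF : (A ∪ F).Nonempty) (hp : 1 ≤ p) (hγ : 1 < γ)
    (hs : s < γ) (ht : γ < t) :
    ∃ D : ℝ≥0∞, D ≠ ⊤ ∧ ∀ (u : E → ℝ) (L : NNReal), LipschitzWith L u → HasCompactSupport u →
      Disjoint (tsupport u) A →
      ∫⁻ x in (A ∪ F)ᶜ, ‖u x‖ₑ ^ p * infEDist x (A ∪ F) ^ (-γ) ∂μ ≤
        D * ∫⁻ x in (A ∪ F)ᶜ, ‖fderiv ℝ u x‖ₑ ^ p * infEDist x (A ∪ F) ^ (p - γ) ∂μ := by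
  have hp0 : 0 < p := by linarith
  obtain ⟨D, hD, hardy⟩ :=
    exists_setLIntegral_enorm_mul_infEDist_union_rpow_le hA hthick hc hF hthin hγ hs ht
  refine ⟨(D * ENNReal.ofReal p) ^ p, by finiteness, fun u L hu huc huA ↦ ?_⟩
  obtain ⟨B, hB⟩ := huc.exists_bound_of_continuous hu.continuous
  obtain ⟨L', hL'⟩ := exists_lipschitzWith_abs_rpow hp hu hB
  have hsupp := tsupport_abs_rpow_subset u hp0.ne'
  obtain ⟨hfin, hle⟩ := hardy (fun x ↦ |u x| ^ p) L' hL'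
    (huc.of_isClosed_subset (isClosed_tsupport _) hsupp) (huA.mono_left hsupp)
  simp only [enorm_abs_rpow hp0.le] at hfin hle
  have hClosed : IsClosed (A ∪ F) := hA.union hF
  have hHolder := setLIntegral_enorm_fderiv_abs_rpow_mul_le (μ := μ) hp hu
    hClosed.measurableSet.compl measurable_infEDist
    (fun x hx h ↦ hx ((mem_iff_infEDist_zero_of_closed hClosed).2 h))
    (fun _ _ ↦ infEDist_ne_top hAF) γ
  refine le_rpow_mul_of_le_mul_rpow_mul_rpow hp0 hfin ?_
  rw [mul_assoc]
  exact hle.trans (mul_le_mul_right hHolder _)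

end Power

lemma setLIntegral_ofReal_norm_rpow_mul_infDist_compl_rpow {X G : Type*} [PseudoMetricSpace X]
    [MeasurableSpace X] [OpensMeasurableSpace X] {μ : Measure X} [SeminormedAddCommGroup G]
    {Ω : Set X} (hΩ : IsOpen Ω) (hne : Ωᶜ.Nonempty) {p : ℝ} (hp : 0 ≤ p) (g : X → G) (y : ℝ) :
    ∫⁻ x in Ω, ENNReal.ofReal (‖g x‖ ^ p * infDist x Ωᶜ ^ y) ∂μ =
      ∫⁻ x in Ω, ‖g x‖ₑ ^ p * infEDist x Ωᶜ ^ y ∂μ := by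
  refine setLIntegral_congr_fun hΩ.measurableSet fun x hx ↦ ?_
  have hpos : 0 < infDist x Ωᶜ := (hΩ.isClosed_compl.notMem_iff_infDist_pos hne).1 (not_not.2 hx)
  have hdist : ENNReal.ofReal (infDist x Ωᶜ) = infEDist x Ωᶜ :=
    ENNReal.ofReal_toReal (infEDist_ne_top hne)
  rw [ENNReal.ofReal_mul (by positivity), ← ENNReal.ofReal_rpow_of_nonneg (norm_nonneg _) hp,
    ofReal_norm, ← ENNReal.ofReal_rpow_of_pos hpos, hdist]

theorem hardy_thick_and_thin_general {E : Type*} [NormedAddCommGroup E] [NormedSpace ℝ E]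
    [FiniteDimensional ℝ E] [MeasurableSpace E] [BorelSpace E] (μ : Measure E)
    [μ.IsAddHaarMeasure] {p β s c₀ t C_A : ℝ} (hp : 1 ≤ p) (hβ : β < p - 1) {Ω₀ F : Set E}
    (hΩ₀ : IsOpen Ω₀) (hF : IsClosed F) (hne : (Ω₀ \ F)ᶜ.Nonempty)
    (hthick : IsAssouadThick μ Ω₀ᶜ s c₀) (hs : s < p - β) (hc₀ : 0 < c₀)
    (hthin : IsAssouadThin μ F t C_A) (ht : p - β < t) :
    ∃ C : ℝ, 0 < C ∧ ∀ u : E → ℝ, (∃ L : NNReal, LipschitzWith L u) → HasCompactSupport u →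
      tsupport u ⊆ Ω₀ →
      ∫⁻ x in Ω₀ \ F, ENNReal.ofReal (|u x| ^ p * infDist x (Ω₀ \ F)ᶜ ^ (β - p)) ∂μ ≤
        ENNReal.ofReal C *
          ∫⁻ x in Ω₀ \ F,
            ENNReal.ofReal (‖fderiv ℝ u x‖ ^ p * infDist x (Ω₀ \ F)ᶜ ^ β) ∂μ := by
  have hcompl : (Ω₀ \ F)ᶜ = Ω₀ᶜ ∪ F := by rw [Set.sdiff_eq, Set.compl_inter, compl_compl]
  obtain ⟨C, hC, hardy⟩ := exists_setLIntegral_enorm_rpow_mul_infEDist_union_rpow_le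
    hΩ₀.isClosed_compl hthick hc₀ hF hthin (hcompl ▸ hne) hp (by linarith) hs ht
  simp only [← hcompl, compl_compl, _root_.sub_sub_cancel, neg_sub] at hardy
  refine ⟨C.toReal + 1, by positivity, fun u ⟨L, hu⟩ huc huΩ₀ ↦ ?_⟩
  have hCle : C ≤ ENNReal.ofReal (C.toReal + 1) :=
    (ENNReal.ofReal_toReal hC).symm.trans_le (ENNReal.ofReal_le_ofReal (by linarith))
  simp_rw [← Real.norm_eq_abs,
    setLIntegral_ofReal_norm_rpow_mul_infDist_compl_rpow (hΩ₀.sdiff hF) hne (zero_le_one.trans hp)]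
  exact (hardy u L hu huc (Set.disjoint_compl_right_iff_subset.2 huΩ₀)).trans
    (mul_le_mul_left hCle _)

/-- (Corollary 7.2 of the paper.) Combining a thick and a thin part of
the complement: if `Ω₀ᶜ` is unbounded with upper Assouad codimension `< p - β` and
`F ⊆ closure Ω₀` is a nonempty closed set with lower Assouad codimension `> p - β`, then
`Ω = Ω₀ \ F` admits a `(p,β)`-Hardy inequality for all Lipschitz test functions with
compact support in `Ω₀` (not required to vanish on `F ∩ Ω₀`). -/
theorem hardy_thick_and_thin
    (n : ℕ) (hn : 1 ≤ n) (p β : ℝ) (hp : 1 < p) (hβ : β < p - 1)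
    (Ω₀ : Set (EuclideanSpace ℝ (Fin n))) (hΩ₀open : IsOpen Ω₀) (hΩ₀c : Ω₀ᶜ.Nonempty)
    (hΩ₀cUnb : ¬ Bornology.IsBounded Ω₀ᶜ)
    (s c₀ : ℝ) (hs0 : 0 ≤ s) (hs : s < p - β) (hc₀ : 0 < c₀)
    (hthick : ∀ x ∈ Ω₀ᶜ, ∀ r R : ℝ, 0 < r → r < R →
      ENNReal.ofReal (c₀ * (r / R) ^ s) * volume (Metric.closedBall x R) ≤
        volume (Metric.thickening r Ω₀ᶜ ∩ Metric.closedBall x R))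
    (F : Set (EuclideanSpace ℝ (Fin n))) (hF : IsClosed F) (hFne : F.Nonempty)
    (hFsub : F ⊆ closure Ω₀)
    (t C_A : ℝ) (ht : p - β < t) (hCA : 1 ≤ C_A)
    (hthin : ∀ x ∈ F, ∀ r R : ℝ, 0 < r → r < R →
      volume (Metric.thickening r F ∩ Metric.closedBall x R) ≤
        ENNReal.ofReal (C_A * (r / R) ^ t) * volume (Metric.closedBall x R)) :
    ∃ C : ℝ, 0 < C ∧ ∀ u : EuclideanSpace ℝ (Fin n) → ℝ,
      (∃ L : NNReal, LipschitzWith L u) → HasCompactSupport u → tsupport u ⊆ Ω₀ →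
      ∫⁻ x in Ω₀ \ F,
          ENNReal.ofReal (|u x| ^ p * Metric.infDist x (Ω₀ \ F)ᶜ ^ (β - p)) ≤
        ENNReal.ofReal C *
          ∫⁻ x in Ω₀ \ F,
            ENNReal.ofReal (‖fderiv ℝ u x‖ ^ p * Metric.infDist x (Ω₀ \ F)ᶜ ^ β) :=
  hardy_thick_and_thin_general volume hp.le hβ hΩ₀open hF
    (hFne.mono fun _ hx h ↦ h.2 hx) hthick hs hc₀ hthin ht
end

section
/- Let n ≥ 2, let e₁ ∈ ℝⁿ be the first standard basis vector, let F = {0} ∪ {2^{−j} e₁ : j ∈ ℕ, j ≥ 2} ⊆ ℝⁿ, and let Ω₁ = B(0,2) \ F, where B(0,2) is the open ball of radius 2 centered at the origin. Then for every p with 1 < p < n, the domain Ω₁ admits a p-Hardy inequality: there exists C > 0 such that ∫_{Ω₁} |u(x)|^p d_{Ω₁}(x)^{−p} dx ≤ C ∫_{Ω₁} ‖∇u(x)‖^p dx for every Lipschitz function u : ℝⁿ → ℝ with compact support contained in Ω₁. -/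
open MeasureTheory Metric ENNReal

/-!
Integrating the divergence of `|u| ^ p • X` and applying Young's inequality shows that a vector
field `X` with `κ * w ^ p ≤ div X` and `‖X‖ ≤ A * w ^ (p - 1)` yields the Hardy inequality with
weight `w ^ p`. Radial fields provide the weight `dist x c ^ (-p)` of a single point `c`, for every
`p` other than the dimension, and the weight `(R - dist x a) ^ (-p)` of a ball. The distance to
a union is the smaller of the two distances, so Hardy inequalities pass to intersections of
domains, and the ball and the complement of `F` can be treated separately.

Let `F` accumulate only at `a`, with the balls `B y` of radius comparable to `dist y a` around the
other points `y ∈ F` pairwise disjoint. Outside these balls the distance to `F` is comparable to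
the distance to `a`. Inside `B y`, the inequality at the point `y` is localized by a cutoff function
at the cost of `|u| / dist y a`, which on `B y` is comparable to `|u| / dist x a`. Summing over the
disjoint balls, all error terms are absorbed by the inequality at the point `a`.
-/

open Module (finrank)
open scoped NNReal

section Lipschitz

lemma exists_lipschitzWith_of_hasCompactSupport {α F : Type*} [PseudoMetricSpace α] [ProperSpace α]
    [NormedAddCommGroup F] {f : α → F} (hf : LocallyLipschitz f) (hc : HasCompactSupport f) :
    ∃ L : ℝ≥0, LipschitzWith L f := by
  obtain ⟨K, hK⟩ := LocallyLipschitzOn.exists_lipschitzOnWith_of_compact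
    (hc.isCompact.cthickening (r := 1)) hf.locallyLipschitzOn
  obtain ⟨M, hM⟩ := hf.continuous.bounded_above_of_compact_support hc
  have dist_le_of_mem : ∀ x ∈ tsupport f, ∀ y, dist (f x) (f y) ≤ (K + M.toNNReal) * dist x y := by
    intro x hx y
    by_cases hy : y ∈ cthickening 1 (tsupport f)
    · exact (hK.dist_le_mul x (self_subset_cthickening _ hx) y hy).trans (by gcongr; simp)
    · have hfy : f y = 0 :=
        image_eq_zero_of_notMem_tsupport fun h ↦ hy (self_subset_cthickening _ h)
      have hxy : 1 ≤ dist x y := by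
        rw [dist_comm]
        exact le_of_not_ge fun h ↦ hy (mem_cthickening_of_dist_le y x 1 _ hx h)
      calc dist (f x) (f y) ≤ M.toNNReal * 1 := by
            simpa [hfy] using (hM x).trans (Real.le_coe_toNNReal M)
        _ ≤ (K + M.toNNReal) * dist x y := by gcongr; simp
  refine ⟨K + M.toNNReal, LipschitzWith.of_dist_le_mul fun x y ↦ ?_⟩
  by_cases hx : x ∈ tsupport f
  · exact dist_le_of_mem x hx y
  by_cases hy : y ∈ tsupport f
  · rw [dist_comm, dist_comm x]
    exact dist_le_of_mem y hy x
  · rw [image_eq_zero_of_notMem_tsupport hx, image_eq_zero_of_notMem_tsupport hy, dist_self]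
    positivity

lemma locallyLipschitz_fun_mul {α : Type*} [PseudoEMetricSpace α] {f g : α → ℝ}
    (hf : LocallyLipschitz f) (hg : LocallyLipschitz g) :
    LocallyLipschitz fun x ↦ f x * g x :=
  (contDiff_mul.locallyLipschitz (𝕂 := ℝ)).comp (hf.prodMk hg)

lemma locallyLipschitz_comp_mul_abs_rpow {α : Type*} [PseudoEMetricSpace α] {ρ u : α → ℝ}
    {φ : ℝ → ℝ} {K L : ℝ≥0} {V : Set ℝ} {p : ℝ} (hp : 1 < p) (hV : IsOpen V)
    (hφ : ContDiffOn ℝ 1 φ V) (hρ : LipschitzWith K ρ) (hu : LipschitzWith L u)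
    (hs : tsupport u ⊆ ρ ⁻¹' V) : LocallyLipschitz fun x ↦ φ (ρ x) * |u x| ^ p := by
  intro x
  by_cases hx : x ∈ tsupport u
  · have hsmooth : ContDiffAt ℝ 1 (fun z : ℝ × ℝ ↦ φ z.1 * |z.2| ^ p) (ρ x, u x) := by
      have hφx : ContDiffAt ℝ 1 φ (ρ x) := hφ.contDiffAt (hV.mem_nhds (hs hx))
      have habs : ContDiff ℝ 1 fun t : ℝ ↦ |t| ^ p := by
        simpa using contDiff_norm_rpow (E := ℝ) hp
      exact (hφx.comp (f := Prod.fst) (ρ x, u x) contDiffAt_fst).mul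
        (habs.comp contDiff_snd).contDiffAt
    obtain ⟨M, t, ht, hM⟩ := hsmooth.exists_lipschitzOnWith
    have hpair : LipschitzWith (max K L) fun y ↦ (ρ y, u y) := hρ.prodMk hu
    exact ⟨M * max K L, _, hpair.continuous.continuousAt.preimage_mem_nhds ht,
      hM.comp hpair.lipschitzOnWith (Set.mapsTo_preimage _ _)⟩
  · refine ⟨0, (tsupport u)ᶜ, (isClosed_tsupport u).isOpen_compl.mem_nhds hx, fun y hy z hz ↦ ?_⟩
    simp [image_eq_zero_of_notMem_tsupport hy, image_eq_zero_of_notMem_tsupport hz,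
      Real.zero_rpow (zero_lt_one.trans hp).ne']

end Lipschitz

section Integral

variable {α : Type*} [MeasurableSpace α] {μ : Measure α}

lemma integrable_of_hasCompactSupport_of_bound [TopologicalSpace α] [OpensMeasurableSpace α]
    [IsFiniteMeasureOnCompacts μ] {g : α → ℝ} {M : ℝ} (hg : Measurable g)
    (hc : HasCompactSupport g) (hM : ∀ x ∈ tsupport g, ‖g x‖ ≤ M) : Integrable g μ := by
  rw [← integrableOn_iff_integrable_of_support_subset (subset_tsupport g)]
  exact Measure.integrableOn_of_bounded hc.isCompact.measure_lt_top.ne hg.aestronglyMeasurable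
    (ae_restrict_of_forall_mem (isClosed_tsupport g).measurableSet hM)

lemma lintegral_ofReal_le_of_le_add_of_integral_eq_zero {f g h : α → ℝ}
    (hf : 0 ≤ᵐ[μ] f) (hg : 0 ≤ᵐ[μ] g) (hgi : Integrable g μ) (hhi : Integrable h μ)
    (hh : ∫ x, h x ∂μ = 0) (hle : ∀ᵐ x ∂μ, f x ≤ g x + h x) :
    ∫⁻ x, ENNReal.ofReal (f x) ∂μ ≤ ∫⁻ x, ENNReal.ofReal (g x) ∂μ := by
  calc ∫⁻ x, ENNReal.ofReal (f x) ∂μ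
      ≤ ∫⁻ x, ENNReal.ofReal (g x + h x) ∂μ :=
        lintegral_mono_ae (hle.mono fun x hx ↦ ENNReal.ofReal_le_ofReal hx)
    _ = ENNReal.ofReal (∫ x, g x + h x ∂μ) :=
        (ofReal_integral_eq_lintegral_ofReal (hgi.add hhi) (hf.trans hle)).symm
    _ = ENNReal.ofReal (∫ x, g x ∂μ) := by rw [integral_add hgi hhi, hh, add_zero]
    _ = ∫⁻ x, ENNReal.ofReal (g x) ∂μ := ofReal_integral_eq_lintegral_ofReal hgi hg

end Integral

section Euler

variable {E : Type*} [NormedAddCommGroup E] [NormedSpace ℝ E] [FiniteDimensional ℝ E]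
  [MeasurableSpace E] [BorelSpace E] {μ : Measure E}
  {f : E → ℝ} {L : ℝ≥0}

lemma integrable_fderiv_apply [IsFiniteMeasureOnCompacts μ]
    (hf : LipschitzWith L f) (hc : HasCompactSupport f) {X : E → E} (hX : Continuous X) :
    Integrable (fun x ↦ fderiv ℝ f x (X x)) μ := by
  obtain ⟨M, hM⟩ := hc.isCompact.exists_bound_of_continuousOn hX.continuousOn
  have hsupp : tsupport (fun x ↦ fderiv ℝ f x (X x)) ⊆ tsupport f :=
    closure_minimal (fun x hx ↦ by
      contrapose! hx
      simp [fderiv_of_notMem_tsupport ℝ hx]) (isClosed_tsupport f)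
  refine integrable_of_hasCompactSupport_of_bound (M := L * M) ?_
    (hc.of_isClosed_subset (isClosed_tsupport _) hsupp) fun x hx ↦ ?_
  · exact isBoundedBilinearMap_apply.continuous.measurable.comp
      ((measurable_fderiv ℝ f).prodMk hX.measurable)
  · calc ‖fderiv ℝ f x (X x)‖ ≤ ‖fderiv ℝ f x‖ * ‖X x‖ := (fderiv ℝ f x).le_opNorm _
      _ ≤ L * M := by
        gcongr
        exacts [norm_fderiv_le_of_lipschitz ℝ hf, hM x (hsupp hx)]

variable [μ.IsAddHaarMeasure]

lemma integral_fderiv_apply_mul_sub (hf : LipschitzWith L f) (hc : HasCompactSupport f)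
    (ℓ : E →L[ℝ] ℝ) (c v : E) :
    ∫ x, fderiv ℝ f x v * ℓ (x - c) ∂μ = -(ℓ v * ∫ x, f x ∂μ) := by
  have hℓ : LipschitzWith ‖ℓ‖₊ fun x ↦ ℓ (x - c) := by
    simpa [Function.comp_def] using
      ℓ.lipschitz.comp (LipschitzWith.id.sub (LipschitzWith.const c))
  have hlineDeriv : ∀ x, lineDeriv ℝ (fun x ↦ ℓ (x - c)) x v = ℓ v := fun x ↦ by
    have h : HasFDerivAt (fun x ↦ ℓ (x - c)) ℓ x := ℓ.hasFDerivAt.comp x (hasFDerivAt_sub_const c)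
    exact (h.hasLineDerivAt v).lineDeriv
  calc ∫ x, fderiv ℝ f x v * ℓ (x - c) ∂μ
      = -∫ x, lineDeriv ℝ f x (-v) * ℓ (x - c) ∂μ := by
        rw [← integral_neg]
        refine integral_congr_ae ?_
        filter_upwards [hf.ae_differentiableAt] with x hx
        simp [hx.lineDeriv_eq_fderiv]
    _ = -(ℓ v * ∫ x, f x ∂μ) := by
        rw [← hℓ.integral_lineDeriv_mul_eq hf hc v]
        simp only [hlineDeriv, integral_const_mul]

lemma integral_fderiv_apply_sub (hf : LipschitzWith L f) (hc : HasCompactSupport f) (c : E) :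
    ∫ x, fderiv ℝ f x (x - c) ∂μ = -(finrank ℝ E * ∫ x, f x ∂μ) := by
  let b := Module.finBasis ℝ E
  let ℓ i : E →L[ℝ] ℝ := (b.coord i).toContinuousLinearMap
  have hint i : Integrable (fun x ↦ fderiv ℝ f x (b i) * ℓ i (x - c)) μ := by
    have h := integrable_fderiv_apply (μ := μ) hf hc (X := fun x ↦ ℓ i (x - c) • b i) (by fun_prop)
    simpa [mul_comm] using h
  calc ∫ x, fderiv ℝ f x (x - c) ∂μ
      = ∫ x, ∑ i, fderiv ℝ f x (b i) * ℓ i (x - c) ∂μ := by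
        congr with x
        conv_lhs => rw [← b.sum_repr (x - c), map_sum]
        simp [ℓ, mul_comm]
    _ = ∑ i, -(ℓ i (b i) * ∫ x, f x ∂μ) := by
        rw [integral_finsetSum _ fun i _ ↦ hint i]
        simp only [integral_fderiv_apply_mul_sub hf hc]
    _ = -(finrank ℝ E * ∫ x, f x ∂μ) := by simp [ℓ]

lemma integral_divergence_smul_sub_eq_zero (hf : LipschitzWith L f) (hc : HasCompactSupport f)
    (c : E) : ∫ x, (finrank ℝ E * f x + fderiv ℝ f x (x - c)) ∂μ = 0 := by
  rw [integral_add ((hf.continuous.integrable_of_hasCompactSupport hc).const_mul _)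
    (integrable_fderiv_apply hf hc (X := fun x ↦ x - c) (by fun_prop)),
    integral_fderiv_apply_sub hf hc, integral_const_mul, add_neg_cancel]

end Euler

section Radial

lemma mul_rpow_sub_one_mul_le {p a b : ℝ} (hp : 1 < p) (ha : 0 ≤ a) (hb : 0 ≤ b) :
    p * (a ^ (p - 1) * b) ≤ (p - 1) * a ^ p + b ^ p := by
  have : 0 < p := zero_lt_one.trans hp
  have hp1 : p - 1 ≠ 0 := (sub_pos.2 hp).ne'
  have hpow : (a ^ (p - 1)) ^ p.conjExponent = a ^ p := by
    rw [← Real.rpow_mul ha, Real.conjExponent, mul_div_cancel₀ _ hp1]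
  have hyoung := Real.young_inequality_of_nonneg (Real.rpow_nonneg ha (p - 1)) hb
    (Real.HolderConjugate.conjExponent hp).symm
  rw [hpow] at hyoung
  calc p * (a ^ (p - 1) * b) ≤ p * (a ^ p / p.conjExponent + b ^ p / p) := by gcongr
    _ = (p - 1) * a ^ p + b ^ p := by rw [Real.conjExponent]; field_simp

lemma rpow_le_rpow_add_of_mul_rpow_sub_le {p κ A a g H : ℝ} (hp : 1 < p) (hκ : 0 < κ) (hA : 0 ≤ A)
    (ha : 0 ≤ a) (hg : 0 ≤ g) (h : κ * a ^ p - p * A * a ^ (p - 1) * g ≤ H) :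
    a ^ p ≤ (p * A / κ * g) ^ p + p / κ * H := by
  have : 0 < p := zero_lt_one.trans hp
  have hyoung := mul_rpow_sub_one_mul_le hp ha (b := p * A / κ * g) (by positivity)
  have hH : p / κ * (κ * a ^ p - p * A * a ^ (p - 1) * g) ≤ p / κ * H := by gcongr
  have hexpand : p / κ * (κ * a ^ p - p * A * a ^ (p - 1) * g) =
      p * a ^ p - p * (a ^ (p - 1) * (p * A / κ * g)) := by field_simp
  linarith

/-- A radial profile `φ` on the set `V` of radii. It encodes the vector field
`X x = φ ‖x - c‖ • (x - c)` in dimension `n`, for which the two estimates read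
`κ * w ^ p ≤ div X` and `‖X‖ ≤ A * w ^ (p - 1)` at the points with `‖x - c‖ ∈ V`; these are the
hypotheses under which integration by parts yields the Hardy inequality with weight `w ^ p`. -/
structure IsHardyProfile (n p κ A : ℝ) (V : Set ℝ) (φ w : ℝ → ℝ) : Prop where
  isOpen : IsOpen V
  contDiffOn : ContDiffOn ℝ 1 φ V
  coercivity_pos : 0 < κ
  bound_nonneg : 0 ≤ A
  weight_nonneg : ∀ t ∈ V, 0 ≤ t → 0 ≤ w t
  le_divergence : ∀ t ∈ V, 0 ≤ t → κ * w t ^ p ≤ n * φ t + deriv φ t * t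
  abs_mul_le : ∀ t ∈ V, 0 ≤ t → |φ t| * t ≤ A * w t ^ (p - 1)

variable {E : Type*} [NormedAddCommGroup E] [NormedSpace ℝ E] {u : E → ℝ}
  {p κ A : ℝ} {V : Set ℝ} {φ w : ℝ → ℝ} {c x : E}

lemma fderiv_norm_sub_apply_sub (hx : DifferentiableAt ℝ (fun y ↦ ‖y - c‖) x) :
    fderiv ℝ (fun y ↦ ‖y - c‖) x (x - c) = ‖x - c‖ := by
  rw [fderiv_comp_sub (f := fun y ↦ ‖y‖)]
  exact ((differentiableAt_comp_sub (f := fun y ↦ ‖y‖) c).1 hx).fderiv_norm_self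

lemma abs_mul_abs_rpow_sub_two_mul (hp : 1 < p) (t : ℝ) :
    |p * |t| ^ (p - 2) * t| = p * |t| ^ (p - 1) := by
  rw [abs_mul, abs_of_nonneg (by positivity), mul_assoc,
    ← Real.rpow_add_one' (abs_nonneg t) (by linarith)]
  ring_nf

lemma fderiv_radial_mul_abs_rpow_apply_sub (hp : 1 < p) (hφ : DifferentiableAt ℝ φ ‖x - c‖)
    (hx : DifferentiableAt ℝ (fun y ↦ ‖y - c‖) x) (hu : DifferentiableAt ℝ u x) :
    fderiv ℝ (fun y ↦ φ ‖y - c‖ * |u y| ^ p) x (x - c) =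
      deriv φ ‖x - c‖ * ‖x - c‖ * |u x| ^ p +
        φ ‖x - c‖ * (p * |u x| ^ (p - 2) * u x * fderiv ℝ u x (x - c)) := by
  have hradial := hφ.hasDerivAt.comp_hasFDerivAt x hx.hasFDerivAt
  have hpow := (hasDerivAt_abs_rpow (u x) hp).comp_hasFDerivAt x hu.hasFDerivAt
  have hmul : fderiv ℝ (fun y ↦ φ ‖y - c‖ * |u y| ^ p) x = _ := (hradial.mul hpow).fderiv
  rw [hmul]
  simp only [Function.comp_apply, add_apply, smul_apply, smul_eq_mul,
    fderiv_norm_sub_apply_sub hx]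
  ring

namespace IsHardyProfile

lemma le_divergence_mul_abs_rpow {n : ℝ} (h : IsHardyProfile n p κ A V φ w) (hp : 1 < p)
    (hxV : ‖x - c‖ ∈ V) (hx : DifferentiableAt ℝ (fun y ↦ ‖y - c‖) x)
    (hu : DifferentiableAt ℝ u x) :
    κ * (|u x| * w ‖x - c‖) ^ p - p * A * (|u x| * w ‖x - c‖) ^ (p - 1) * ‖fderiv ℝ u x‖ ≤
      n * (φ ‖x - c‖ * |u x| ^ p) + fderiv ℝ (fun y ↦ φ ‖y - c‖ * |u y| ^ p) x (x - c) := by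
  have hφ : DifferentiableAt ℝ φ ‖x - c‖ :=
    (h.contDiffOn.contDiffAt (h.isOpen.mem_nhds hxV)).differentiableAt one_ne_zero
  rw [fderiv_radial_mul_abs_rpow_apply_sub hp hφ hx hu]
  set t := ‖x - c‖
  have ht : 0 ≤ t := norm_nonneg _
  have hw : 0 ≤ w t := h.weight_nonneg t hxV ht
  rw [Real.mul_rpow (abs_nonneg _) hw, Real.mul_rpow (abs_nonneg _) hw]
  have hdiv : κ * (|u x| ^ p * w t ^ p) ≤ |u x| ^ p * (n * φ t + deriv φ t * t) := by
    rw [mul_left_comm]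
    gcongr
    exact h.le_divergence t hxV ht
  have hflux : |φ t * (p * |u x| ^ (p - 2) * u x * fderiv ℝ u x (x - c))| ≤
      p * A * (|u x| ^ (p - 1) * w t ^ (p - 1)) * ‖fderiv ℝ u x‖ := by
    rw [abs_mul, abs_mul, abs_mul_abs_rpow_sub_two_mul hp]
    calc |φ t| * (p * |u x| ^ (p - 1) * |fderiv ℝ u x (x - c)|)
        ≤ |φ t| * (p * |u x| ^ (p - 1) * (‖fderiv ℝ u x‖ * t)) := by
          gcongr
          exact (fderiv ℝ u x).le_opNorm (x - c)
      _ = p * |u x| ^ (p - 1) * ‖fderiv ℝ u x‖ * (|φ t| * t) := by ring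
      _ ≤ p * |u x| ^ (p - 1) * ‖fderiv ℝ u x‖ * (A * w t ^ (p - 1)) :=
          mul_le_mul_of_nonneg_left (h.abs_mul_le t hxV ht) (by positivity)
      _ = p * A * (|u x| ^ (p - 1) * w t ^ (p - 1)) * ‖fderiv ℝ u x‖ := by ring
  linarith [neg_abs_le (φ t * (p * |u x| ^ (p - 2) * u x * fderiv ℝ u x (x - c)))]

lemma rpow_le_rpow_add_divergence {n : ℝ} (h : IsHardyProfile n p κ A V φ w) (hp : 1 < p)
    (hxV : x ∈ tsupport u → ‖x - c‖ ∈ V) (hx : DifferentiableAt ℝ (fun y ↦ ‖y - c‖) x)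
    (hu : DifferentiableAt ℝ u x) :
    (|u x| * w ‖x - c‖) ^ p ≤ (p * A / κ * ‖fderiv ℝ u x‖) ^ p +
      p / κ * (n * (φ ‖x - c‖ * |u x| ^ p) +
        fderiv ℝ (fun y ↦ φ ‖y - c‖ * |u y| ^ p) x (x - c)) := by
  by_cases hxu : x ∈ tsupport u
  · have hw : 0 ≤ w ‖x - c‖ := h.weight_nonneg _ (hxV hxu) (norm_nonneg _)
    exact rpow_le_rpow_add_of_mul_rpow_sub_le hp h.coercivity_pos h.bound_nonneg (by positivity)
      (norm_nonneg _) (h.le_divergence_mul_abs_rpow hp (hxV hxu) hx hu)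
  · have hp0 : p ≠ 0 := (zero_lt_one.trans hp).ne'
    have hfderiv : fderiv ℝ (fun y ↦ φ ‖y - c‖ * |u y| ^ p) x = 0 :=
      fderiv_of_notMem_tsupport ℝ fun hxf ↦ hxu <| closure_mono (fun y hy ↦ by
        contrapose! hy
        simp_all) hxf
    simp [image_eq_zero_of_notMem_tsupport hxu, fderiv_of_notMem_tsupport ℝ hxu, hfderiv, hp0]

end IsHardyProfile

end Radial

section Energy

variable {E : Type*} [NormedAddCommGroup E] [NormedSpace ℝ E] [MeasurableSpace E]

/-- The `p`-Dirichlet energy `∫ ‖∇u‖ ^ p`, with `∇u` represented by the Fréchet derivative. -/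
noncomputable def dirichletEnergy (μ : Measure E) (p : ℝ) (u : E → ℝ) : ℝ≥0∞ :=
  ∫⁻ x, ENNReal.ofReal (‖fderiv ℝ u x‖ ^ p) ∂μ

variable {μ : Measure E} {u : E → ℝ} {L : ℝ≥0} {p : ℝ}

lemma setLIntegral_norm_fderiv_rpow {Ω : Set E} (hp : p ≠ 0) (hs : tsupport u ⊆ Ω) :
    ∫⁻ x in Ω, ENNReal.ofReal (‖fderiv ℝ u x‖ ^ p) ∂μ = dirichletEnergy μ p u := by
  refine setLIntegral_eq_of_support_subset fun x hx ↦ hs ?_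
  contrapose! hx
  simp [fderiv_of_notMem_tsupport ℝ hx, Real.zero_rpow hp]

lemma integrable_norm_fderiv_rpow [FiniteDimensional ℝ E] [BorelSpace E]
    [IsFiniteMeasureOnCompacts μ] (hp : 0 < p) (hu : LipschitzWith L u)
    (hc : HasCompactSupport u) : Integrable (fun x ↦ ‖fderiv ℝ u x‖ ^ p) μ := by
  refine integrable_of_hasCompactSupport_of_bound (M := L ^ p)
    ((measurable_fderiv ℝ u).norm.pow_const p)
    ((hc.fderiv ℝ).comp_left (g := fun T ↦ ‖T‖ ^ p) (by simp [Real.zero_rpow hp.ne'])) fun x _ ↦ ?_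
  rw [Real.norm_of_nonneg (by positivity)]
  gcongr
  exact norm_fderiv_le_of_lipschitz ℝ hu

theorem IsHardyProfile.lintegral_rpow_le [FiniteDimensional ℝ E] [BorelSpace E]
    [μ.IsAddHaarMeasure] {κ A : ℝ} {V : Set ℝ} {φ w : ℝ → ℝ}
    (h : IsHardyProfile (finrank ℝ E) p κ A V φ w) (hp : 1 < p) (hu : LipschitzWith L u)
    (hc : HasCompactSupport u) (c : E) (hs : tsupport u ⊆ (fun x ↦ ‖x - c‖) ⁻¹' V) :
    ∫⁻ x, ENNReal.ofReal ((|u x| * w ‖x - c‖) ^ p) ∂μ ≤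
      ENNReal.ofReal ((p * A / κ) ^ p) * dirichletEnergy μ p u := by
  have hp0 : 0 < p := zero_lt_one.trans hp
  have hA : 0 ≤ p * A / κ := div_nonneg (mul_nonneg hp0.le h.bound_nonneg) h.coercivity_pos.le
  have hnorm : LipschitzWith 1 fun x : E ↦ ‖x - c‖ := by
    simpa [Function.comp_def] using lipschitzWith_one_norm.comp
      (LipschitzWith.id.sub (LipschitzWith.const c))
  set f : E → ℝ := fun x ↦ φ ‖x - c‖ * |u x| ^ p
  have hfc : HasCompactSupport f :=
    (hc.comp_left (g := fun t ↦ |t| ^ p) (by simp [hp0.ne'])).mul_left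
  obtain ⟨Lf, hf⟩ := exists_lipschitzWith_of_hasCompactSupport
    (locallyLipschitz_comp_mul_abs_rpow hp h.isOpen h.contDiffOn hnorm hu hs) hfc
  have hint : Integrable (fun x ↦ finrank ℝ E * f x + fderiv ℝ f x (x - c)) μ :=
    ((hf.continuous.integrable_of_hasCompactSupport hfc).const_mul _).add
      (integrable_fderiv_apply hf hfc (by fun_prop))
  have hle : ∀ᵐ x ∂μ, (|u x| * w ‖x - c‖) ^ p ≤ (p * A / κ * ‖fderiv ℝ u x‖) ^ p +
      p / κ * (finrank ℝ E * f x + fderiv ℝ f x (x - c)) := by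
    filter_upwards [hnorm.ae_differentiableAt, hu.ae_differentiableAt] with x hx hux
    exact h.rpow_le_rpow_add_divergence hp (fun hxu ↦ hs hxu) hx hux
  have hw : ∀ x, 0 ≤ (|u x| * w ‖x - c‖) ^ p := fun x ↦ by
    by_cases hx : x ∈ tsupport u
    · have := h.weight_nonneg _ (hs hx) (norm_nonneg _)
      positivity
    · simp [image_eq_zero_of_notMem_tsupport hx, hp0.ne']
  simp only [Real.mul_rpow hA (norm_nonneg _)] at hle
  calc ∫⁻ x, ENNReal.ofReal ((|u x| * w ‖x - c‖) ^ p) ∂μ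
      ≤ ∫⁻ x, ENNReal.ofReal ((p * A / κ) ^ p * ‖fderiv ℝ u x‖ ^ p) ∂μ :=
        lintegral_ofReal_le_of_le_add_of_integral_eq_zero (.of_forall hw)
          (.of_forall fun x ↦ by positivity)
          ((integrable_norm_fderiv_rpow hp0 hu hc).const_mul _) (hint.const_mul _)
          (by rw [integral_const_mul, integral_divergence_smul_sub_eq_zero hf hfc, mul_zero]) hle
    _ = ENNReal.ofReal ((p * A / κ) ^ p) * dirichletEnergy μ p u := by
        simp only [ENNReal.ofReal_mul (Real.rpow_nonneg hA p)]
        exact lintegral_const_mul' _ _ ENNReal.ofReal_ne_top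

end Energy

section Profiles

lemma isHardyProfile_point {n p : ℝ} (hnp : p ≠ n) :
    IsHardyProfile n p ((n - p) ^ 2) |n - p| (Set.Ioi 0) (fun t ↦ (n - p) * t ^ (-p))
      (fun t ↦ t⁻¹) where
  isOpen := isOpen_Ioi
  contDiffOn t ht :=
    (contDiffAt_const.mul (Real.contDiffAt_rpow_const_of_ne (Set.mem_Ioi.1 ht).ne'))
      |>.contDiffWithinAt
  coercivity_pos := by have := sub_ne_zero.2 hnp.symm; positivity
  bound_nonneg := abs_nonneg _
  weight_nonneg _ _ ht := inv_nonneg.2 ht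
  le_divergence t ht _ := by
    have ht0 : t ≠ 0 := (Set.mem_Ioi.1 ht).ne'
    have hderiv := ((Real.hasDerivAt_rpow_const (p := -p) (.inl ht0)).const_mul (n - p)).deriv
    rw [hderiv, Real.inv_rpow ht.le, ← Real.rpow_neg ht.le, Real.rpow_sub_one ht0]
    field_simp
    linarith
  abs_mul_le t ht _ := by
    rw [abs_mul, abs_of_pos (Real.rpow_pos_of_pos ht _), Real.inv_rpow ht.le,
      ← Real.rpow_neg ht.le, neg_sub, sub_eq_neg_add 1 p, Real.rpow_add_one (ne_of_gt ht),
      mul_assoc]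

lemma isHardyProfile_ball {n p R : ℝ} (hn : 0 < n) (hp : 1 < p) (hR : 0 < R) :
    IsHardyProfile n p (min n (p - 1) * R) R (Set.Iio R) (fun t ↦ (R - t) ^ (1 - p))
      (fun t ↦ (R - t)⁻¹) where
  isOpen := isOpen_Iio
  contDiffOn t ht :=
    ((contDiffAt_const.sub contDiffAt_id).rpow_const_of_ne (sub_pos.2 ht).ne').contDiffWithinAt
  coercivity_pos := mul_pos (lt_min hn (sub_pos.2 hp)) hR
  bound_nonneg := hR.le
  weight_nonneg _ ht _ := inv_nonneg.2 (sub_pos.2 ht).le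
  le_divergence t ht ht0 := by
    have hs : 0 < R - t := sub_pos.2 ht
    have hderiv : deriv (fun t ↦ (R - t) ^ (1 - p)) t = (p - 1) * (R - t) ^ (-p) := by
      rw [(((hasDerivAt_id' t).const_sub R).rpow_const (p := 1 - p) (.inl hs.ne')).deriv]
      ring_nf
    rw [hderiv, Real.inv_rpow hs.le, ← Real.rpow_neg hs.le, sub_eq_neg_add 1 p,
      Real.rpow_add_one hs.ne']
    have hmin : min n (p - 1) * R ≤ n * (R - t) + (p - 1) * t := by
      nlinarith [min_le_left n (p - 1), min_le_right n (p - 1)]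
    calc min n (p - 1) * R * (R - t) ^ (-p) ≤ (n * (R - t) + (p - 1) * t) * (R - t) ^ (-p) := by
          gcongr
      _ = n * ((R - t) ^ (-p) * (R - t)) + (p - 1) * (R - t) ^ (-p) * t := by ring
  abs_mul_le t ht _ := by
    have hs : 0 < R - t := sub_pos.2 ht
    rw [Real.abs_rpow_of_nonneg hs.le, abs_of_pos hs, Real.inv_rpow hs.le, ← Real.rpow_neg hs.le,
      neg_sub, mul_comm]
    gcongr
    exact ht.le

end Profiles

section Inequality

lemma infDist_union_eq_or {α : Type*} [PseudoMetricSpace α] {s t : Set α} (x : α) :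
    infDist x (s ∪ t) = infDist x s ∨ infDist x (s ∪ t) = infDist x t := by
  simp only [infDist, infEDist_union]
  exact (min_choice (infEDist x s) (infEDist x t)).imp (congrArg _) (congrArg _)

lemma sub_dist_le_infDist_compl_ball {α : Type*} [PseudoMetricSpace α] {a x : α} {R : ℝ}
    (h : (ball a R)ᶜ.Nonempty) : R - dist x a ≤ infDist x (ball a R)ᶜ := by
  refine (le_infDist h).2 fun {y} hy ↦ ?_
  have hya : R ≤ dist y a := not_lt.1 hy
  linarith [dist_triangle_left y a x]

variable {E : Type*} [NormedAddCommGroup E] [NormedSpace ℝ E] [MeasurableSpace E]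
  {μ : Measure E} {p : ℝ} {Ω Ω₁ Ω₂ : Set E}

/-- The domain `Ω` admits a `p`-Hardy inequality: the weight is a power of the distance to the
complement, and the test functions are the Lipschitz functions with compact support in `Ω`.
If `Ω` is the whole space then `infDist x ∅ = 0` and the weight is zero. -/
def AdmitsHardyInequality (μ : Measure E) (p : ℝ) (Ω : Set E) : Prop :=
  ∃ C : ℝ, 0 < C ∧ ∀ u : E → ℝ,
    (∃ L : ℝ≥0, LipschitzWith L u) → HasCompactSupport u → tsupport u ⊆ Ω →
    ∫⁻ x in Ω, ENNReal.ofReal (|u x| ^ p * infDist x Ωᶜ ^ (-p)) ∂μ ≤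
      ENNReal.ofReal C * ∫⁻ x in Ω, ENNReal.ofReal (‖fderiv ℝ u x‖ ^ p) ∂μ

lemma admitsHardyInequality_iff (hp : p ≠ 0) : AdmitsHardyInequality μ p Ω ↔
    ∃ C : ℝ≥0, ∀ u : E → ℝ, (∃ L : ℝ≥0, LipschitzWith L u) → HasCompactSupport u →
      tsupport u ⊆ Ω →
      ∫⁻ x, ENNReal.ofReal (|u x| ^ p * infDist x Ωᶜ ^ (-p)) ∂μ ≤ C * dirichletEnergy μ p u := by
  have hlhs (u : E → ℝ) (hs : tsupport u ⊆ Ω) :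
      ∫⁻ x in Ω, ENNReal.ofReal (|u x| ^ p * infDist x Ωᶜ ^ (-p)) ∂μ =
        ∫⁻ x, ENNReal.ofReal (|u x| ^ p * infDist x Ωᶜ ^ (-p)) ∂μ := by
    refine setLIntegral_eq_of_support_subset fun x hx ↦ hs (subset_tsupport u ?_)
    contrapose! hx
    simp [Function.notMem_support.1 hx, hp]
  constructor
  · rintro ⟨C, -, h⟩
    refine ⟨C.toNNReal, fun u hu hc hs ↦ ?_⟩
    rw [← hlhs u hs, ← setLIntegral_norm_fderiv_rpow hp hs]
    exact h u hu hc hs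
  · rintro ⟨C, h⟩
    refine ⟨C + 1, by positivity, fun u hu hc hs ↦ ?_⟩
    rw [hlhs u hs, setLIntegral_norm_fderiv_rpow hp hs]
    refine (h u hu hc hs).trans ?_
    gcongr
    rw [← ENNReal.ofReal_coe_nnreal]
    exact ENNReal.ofReal_le_ofReal (le_add_of_nonneg_right zero_le_one)

lemma AdmitsHardyInequality.inter [OpensMeasurableSpace E] (hp : p ≠ 0)
    (h₁ : AdmitsHardyInequality μ p Ω₁) (h₂ : AdmitsHardyInequality μ p Ω₂) :
    AdmitsHardyInequality μ p (Ω₁ ∩ Ω₂) := by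
  rw [admitsHardyInequality_iff hp] at *
  obtain ⟨C₁, h₁⟩ := h₁
  obtain ⟨C₂, h₂⟩ := h₂
  refine ⟨C₁ + C₂, fun u hu hc hs ↦ ?_⟩
  have hmeas : Measurable fun x ↦ ENNReal.ofReal (|u x| ^ p * infDist x Ω₁ᶜ ^ (-p)) := by
    have hum : Measurable u := hu.choose_spec.continuous.measurable
    exact ((measurable_norm.comp hum).pow_const p |>.mul
      ((continuous_infDist_pt _).measurable.pow_const _)).ennreal_ofReal
  calc ∫⁻ x, ENNReal.ofReal (|u x| ^ p * infDist x (Ω₁ ∩ Ω₂)ᶜ ^ (-p)) ∂μ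
      ≤ ∫⁻ x, (ENNReal.ofReal (|u x| ^ p * infDist x Ω₁ᶜ ^ (-p)) +
          ENNReal.ofReal (|u x| ^ p * infDist x Ω₂ᶜ ^ (-p))) ∂μ := by
        refine lintegral_mono fun x ↦ ?_
        rw [Set.compl_inter]
        obtain h | h := infDist_union_eq_or (s := Ω₁ᶜ) (t := Ω₂ᶜ) x <;> rw [h]
        exacts [le_self_add, le_add_self]
    _ ≤ C₁ * dirichletEnergy μ p u + C₂ * dirichletEnergy μ p u := by
        rw [lintegral_add_left hmeas]
        exact add_le_add (h₁ u hu hc (hs.trans Set.inter_subset_left))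
          (h₂ u hu hc (hs.trans Set.inter_subset_right))
    _ = ↑(C₁ + C₂) * dirichletEnergy μ p u := by rw [ENNReal.coe_add, add_mul]

variable [FiniteDimensional ℝ E] [BorelSpace E] [μ.IsAddHaarMeasure]

theorem admitsHardyInequality_ball [Nontrivial E] (hp : 1 < p) (a : E) {R : ℝ} (hR : 0 < R) :
    AdmitsHardyInequality μ p (ball a R) := by
  have hp0 : 0 < p := zero_lt_one.trans hp
  have hprofile := isHardyProfile_ball (n := finrank ℝ E) (mod_cast Module.finrank_pos) hp hR
  rw [admitsHardyInequality_iff hp0.ne']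
  refine ⟨((p * R / (min (finrank ℝ E : ℝ) (p - 1) * R)) ^ p).toNNReal, fun u ⟨L, hu⟩ hc hs ↦ ?_⟩
  refine le_trans (lintegral_mono fun x ↦ ENNReal.ofReal_le_ofReal ?_)
    (hprofile.lintegral_rpow_le hp hu hc a fun x hx ↦ by simpa [dist_eq_norm] using hs hx)
  by_cases hx : x ∈ tsupport u
  · have hxa : 0 < R - ‖x - a‖ := by simpa [dist_eq_norm] using hs hx
    have hne : (ball a R)ᶜ.Nonempty := by
      rw [Set.nonempty_compl]
      exact fun h ↦ NormedSpace.unbounded_univ ℝ E (h ▸ isBounded_ball)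
    have hle : R - ‖x - a‖ ≤ infDist x (ball a R)ᶜ := by
      simpa [dist_eq_norm] using sub_dist_le_infDist_compl_ball (x := x) hne
    rw [Real.mul_rpow (abs_nonneg _) (inv_pos.2 hxa).le, Real.inv_rpow hxa.le,
      ← Real.rpow_neg hxa.le]
    exact mul_le_mul_of_nonneg_left
      (Real.rpow_le_rpow_of_nonpos hxa hle (neg_nonpos.2 hp0.le)) (by positivity)
  · simp [image_eq_zero_of_notMem_tsupport hx, hp0.ne']

theorem lintegral_mul_dist_rpow_neg_le {u : E → ℝ} {L : ℝ≥0} (hp : 1 < p)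
    (hpn : p ≠ finrank ℝ E) (hu : LipschitzWith L u) (hc : HasCompactSupport u) {c : E}
    (hcu : c ∉ tsupport u) :
    ∫⁻ x, ENNReal.ofReal (|u x| ^ p * dist x c ^ (-p)) ∂μ ≤
      ENNReal.ofReal ((p / |finrank ℝ E - p|) ^ p) * dirichletEnergy μ p u := by
  have hconst : p * |(finrank ℝ E : ℝ) - p| / (finrank ℝ E - p) ^ 2 = p / |finrank ℝ E - p| := by
    rw [← sq_abs]
    field_simp [abs_ne_zero.2 (sub_ne_zero.2 hpn.symm)]
  have h := (isHardyProfile_point hpn).lintegral_rpow_le (μ := μ) hp hu hc c fun x hx ↦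
    norm_sub_pos_iff.2 fun hxc ↦ hcu (hxc ▸ hx)
  rw [hconst] at h
  convert h using 5 with x
  rw [Real.mul_rpow (abs_nonneg _) (by positivity), Real.inv_rpow (norm_nonneg _),
    ← Real.rpow_neg (norm_nonneg _), dist_eq_norm]

end Inequality

section Localization

variable {E : Type*} [NormedAddCommGroup E] [NormedSpace ℝ E]
  {u χ : E → ℝ} {L K : ℝ≥0} {p : ℝ}

lemma norm_fderiv_mul_le {x : E} (hu : DifferentiableAt ℝ u x) (hχ : DifferentiableAt ℝ χ x)
    (hK : LipschitzWith K χ) (hχ1 : |χ x| ≤ 1) :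
    ‖fderiv ℝ (fun y ↦ u y * χ y) x‖ ≤ ‖fderiv ℝ u x‖ + K * |u x| := by
  rw [fderiv_fun_mul hu hχ]
  calc ‖u x • fderiv ℝ χ x + χ x • fderiv ℝ u x‖
      ≤ |u x| * ‖fderiv ℝ χ x‖ + |χ x| * ‖fderiv ℝ u x‖ := by
        simpa only [norm_smul, Real.norm_eq_abs] using
          norm_add_le (u x • fderiv ℝ χ x) (χ x • fderiv ℝ u x)
    _ ≤ |u x| * K + 1 * ‖fderiv ℝ u x‖ := by
        gcongr
        exact norm_fderiv_le_of_lipschitz ℝ hK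
    _ = ‖fderiv ℝ u x‖ + K * |u x| := by ring

variable [FiniteDimensional ℝ E] [MeasurableSpace E] [BorelSpace E]
  {μ : Measure E} [μ.IsAddHaarMeasure]

lemma exists_lipschitz_localization (hu : LipschitzWith L u) (hc : HasCompactSupport u)
    {δ : ℝ} (hδ : 0 < δ) (A : Set E) :
    ∃ v : E → ℝ, (∃ M : ℝ≥0, LipschitzWith M v) ∧ HasCompactSupport v ∧
      tsupport v ⊆ tsupport u ∧ Set.EqOn v u A ∧
      ∀ᵐ x ∂μ, ‖fderiv ℝ v x‖ ≤
        (cthickening δ A).indicator (fun x ↦ ‖fderiv ℝ u x‖ + δ⁻¹ * |u x|) x := by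
  let χ : E → ℝ := fun x ↦ thickenedIndicator hδ A x
  have hχ : LipschitzWith δ.toNNReal⁻¹ χ := by
    simpa [χ, Function.comp_def] using
      NNReal.isometry_coe.lipschitz.comp (lipschitzWith_thickenedIndicator hδ A)
  have hχ1 (x : E) : |χ x| ≤ 1 := by
    rw [abs_of_nonneg (NNReal.coe_nonneg _)]
    exact_mod_cast thickenedIndicator_le_one hδ A x
  have hsupp : tsupport χ ⊆ cthickening δ A := by
    refine (closure_mono fun x hx ↦ ?_).trans (closure_thickening_subset_cthickening δ A)
    contrapose! hx
    exact Function.notMem_support.2 (NNReal.coe_eq_zero.2 (thickenedIndicator_zero hδ A hx))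
  refine ⟨fun x ↦ u x * χ x, ?_, hc.mul_right, tsupport_mul_subset_left, fun x hx ↦ ?_, ?_⟩
  · exact exists_lipschitzWith_of_hasCompactSupport
      (locallyLipschitz_fun_mul hu.locallyLipschitz hχ.locallyLipschitz) hc.mul_right
  · simp only [χ, thickenedIndicator_one hδ A hx, NNReal.coe_one, mul_one]
  · filter_upwards [hu.ae_differentiableAt, hχ.ae_differentiableAt] with x hux hχx
    by_cases hx : x ∈ cthickening δ A
    · rw [Set.indicator_of_mem hx]
      simpa [hδ.le] using norm_fderiv_mul_le hux hχx hχ (hχ1 x)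
    · rw [Set.indicator_of_notMem hx, fderiv_of_notMem_tsupport ℝ fun h ↦
        hx (hsupp (tsupport_mul_subset_right h)), norm_zero]

theorem setLIntegral_closedBall_mul_dist_rpow_neg_le (hp : 1 < p) (hpn : p ≠ finrank ℝ E)
    (hu : LipschitzWith L u) (hc : HasCompactSupport u) {c : E} (hcu : c ∉ tsupport u)
    {r : ℝ} (hr : 0 < r) :
    ∫⁻ x in closedBall c r, ENNReal.ofReal (|u x| ^ p * dist x c ^ (-p)) ∂μ ≤
      ENNReal.ofReal ((p / |finrank ℝ E - p|) ^ p) *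
        ∫⁻ x in closedBall c (2 * r), ENNReal.ofReal ((‖fderiv ℝ u x‖ + r⁻¹ * |u x|) ^ p) ∂μ := by
  have hp0 : 0 < p := zero_lt_one.trans hp
  obtain ⟨v, ⟨M, hv⟩, hvc, hvu, hveq, hfderiv⟩ :=
    exists_lipschitz_localization (μ := μ) hu hc hr (closedBall c r)
  rw [cthickening_closedBall hr.le hr.le, ← two_mul] at hfderiv
  calc ∫⁻ x in closedBall c r, ENNReal.ofReal (|u x| ^ p * dist x c ^ (-p)) ∂μ
      = ∫⁻ x in closedBall c r, ENNReal.ofReal (|v x| ^ p * dist x c ^ (-p)) ∂μ :=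
        setLIntegral_congr_fun measurableSet_closedBall fun x hx ↦ by simp only [hveq hx]
    _ ≤ ∫⁻ x, ENNReal.ofReal (|v x| ^ p * dist x c ^ (-p)) ∂μ := setLIntegral_le_lintegral _ _
    _ ≤ ENNReal.ofReal ((p / |finrank ℝ E - p|) ^ p) * dirichletEnergy μ p v :=
        lintegral_mul_dist_rpow_neg_le hp hpn hv hvc fun h ↦ hcu (hvu h)
    _ ≤ _ := by
        gcongr
        rw [dirichletEnergy, ← lintegral_indicator measurableSet_closedBall]
        refine lintegral_mono_ae (hfderiv.mono fun x hx ↦ ?_)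
        by_cases hxc : x ∈ closedBall c (2 * r)
        · rw [Set.indicator_of_mem hxc] at hx ⊢
          gcongr
        · rw [Set.indicator_of_notMem hxc] at hx ⊢
          simp [norm_le_zero_iff.1 hx, hp0.ne']

lemma ofReal_add_rpow_le {s t : ℝ} (hp : 1 ≤ p) (hs : 0 ≤ s) (ht : 0 ≤ t) :
    ENNReal.ofReal ((s + t) ^ p) ≤
      2 ^ (p - 1) * (ENNReal.ofReal (s ^ p) + ENNReal.ofReal (t ^ p)) := by
  have : 0 ≤ p := zero_le_one.trans hp
  rw [← ENNReal.ofReal_rpow_of_nonneg (by positivity) this,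
    ← ENNReal.ofReal_rpow_of_nonneg hs this, ← ENNReal.ofReal_rpow_of_nonneg ht this,
    ENNReal.ofReal_add hs ht]
  exact ENNReal.rpow_add_le_mul_rpow_add_rpow _ _ hp

lemma exists_lintegral_norm_fderiv_add_rpow_le (hp : 1 < p) (hpn : p ≠ finrank ℝ E)
    {B : ℝ} (hB : 0 ≤ B) (a : E) :
    ∃ C : ℝ≥0, ∀ (u : E → ℝ) (L : ℝ≥0), LipschitzWith L u → HasCompactSupport u →
      a ∉ tsupport u →
      ∫⁻ x, ENNReal.ofReal ((‖fderiv ℝ u x‖ + B * (dist x a)⁻¹ * |u x|) ^ p) ∂μ ≤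
        C * dirichletEnergy μ p u := by
  let H : ℝ≥0 := ((p / |finrank ℝ E - p|) ^ p).toNNReal
  refine ⟨2 ^ (p - 1) * (1 + (B ^ p).toNNReal * H), fun u L hu hc ha ↦ ?_⟩
  have hterm (x : E) : (B * (dist x a)⁻¹ * |u x|) ^ p =
      B ^ p * (|u x| ^ p * dist x a ^ (-p)) := by
    rw [mul_assoc, Real.mul_rpow hB (by positivity), Real.mul_rpow (by positivity) (abs_nonneg _),
      Real.inv_rpow dist_nonneg, ← Real.rpow_neg dist_nonneg, mul_comm (|u x| ^ p)]
  calc ∫⁻ x, ENNReal.ofReal ((‖fderiv ℝ u x‖ + B * (dist x a)⁻¹ * |u x|) ^ p) ∂μ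
      ≤ ∫⁻ x, 2 ^ (p - 1) * (ENNReal.ofReal (‖fderiv ℝ u x‖ ^ p) +
          ENNReal.ofReal (B ^ p) * ENNReal.ofReal (|u x| ^ p * dist x a ^ (-p))) ∂μ := by
        refine lintegral_mono fun x ↦ ?_
        rw [← ENNReal.ofReal_mul (by positivity), ← hterm]
        exact ofReal_add_rpow_le hp.le (norm_nonneg _) (by positivity)
    _ = 2 ^ (p - 1) * (dirichletEnergy μ p u +
          ENNReal.ofReal (B ^ p) * ∫⁻ x, ENNReal.ofReal (|u x| ^ p * dist x a ^ (-p)) ∂μ) := by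
        rw [lintegral_const_mul' _ _ (by finiteness),
          lintegral_add_left ((measurable_fderiv ℝ u).norm.pow_const p).ennreal_ofReal,
          lintegral_const_mul' _ _ ENNReal.ofReal_ne_top, dirichletEnergy]
    _ ≤ 2 ^ (p - 1) * (dirichletEnergy μ p u +
          ENNReal.ofReal (B ^ p) * (H * dirichletEnergy μ p u)) := by
        gcongr
        exact lintegral_mul_dist_rpow_neg_le hp hpn hu hc ha
    _ = _ := by
        push_cast [ENNReal.ofReal, ENNReal.coe_rpow_of_nonneg _ (sub_pos.2 hp).le]
        ring

end Localization

section RelativeSeparation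

/-- The points of `F` are separated on the scale of their distance to the base point `a`, so that
`a` is the only possible accumulation point. -/
def IsRelativelySeparated {α : Type*} [PseudoMetricSpace α] (a : α) (F : Set α) : Prop :=
  ∃ δ > 0, F.Pairwise fun x y ↦ δ * dist x a ≤ dist x y

lemma IsRelativelySeparated.exists_pairwiseDisjoint {α : Type*} [MetricSpace α] {a : α} {F : Set α}
    (h : IsRelativelySeparated a F) :
    ∃ ε > 0, (F \ {a}).PairwiseDisjoint fun y ↦ closedBall y (2 * (ε * dist y a)) := by
  obtain ⟨δ, hδ, hF⟩ := h
  refine ⟨δ / 8, by positivity, fun y hy z hz hyz ↦ Set.disjoint_left.2 fun x hxy hxz ↦ ?_⟩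
  rw [mem_closedBall] at hxy hxz
  have hdist := dist_triangle_left y z x
  linarith [hF hy.1 hz.1 hyz, hF hz.1 hy.1 hyz.symm, dist_comm y z, dist_pos.2 hyz]

variable {α : Type*} [MetricSpace α] {a x y : α} {F : Set α} {ε p : ℝ}

lemma inv_mul_dist_le (hε : 0 < ε) (hya : y ≠ a) (hxa : x ≠ a)
    (hx : x ∈ closedBall y (2 * (ε * dist y a))) :
    (ε * dist y a)⁻¹ ≤ (2 + ε⁻¹) * (dist x a)⁻¹ := by
  have hy : 0 < dist y a := dist_pos.2 hya
  have hx' : dist x a ≤ (2 + ε⁻¹) * (ε * dist y a) := by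
    calc dist x a ≤ dist x y + dist y a := dist_triangle ..
      _ ≤ 2 * (ε * dist y a) + dist y a := by gcongr; exact hx
      _ = (2 + ε⁻¹) * (ε * dist y a) := by field_simp
  rw [← div_eq_mul_inv, le_div_iff₀ (dist_pos.2 hxa), inv_mul_le_iff₀ (by positivity), mul_comm]
  exact hx'

lemma dist_le_mul_infDist_or_exists (hε : 0 < ε) (ha : a ∈ F) (hx : 0 < infDist x F) :
    dist x a ≤ 2 * (1 + ε⁻¹) * infDist x F ∨
      ∃ y ∈ F \ {a}, x ∈ closedBall y (ε * dist y a) ∧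
        dist x y ≤ 2 * (1 + ε⁻¹) * infDist x F := by
  obtain ⟨y, hyF, hxy⟩ := (infDist_lt_iff ⟨a, ha⟩).1 (lt_two_mul_self hx)
  have hxy' : (1 + ε⁻¹) * dist x y ≤ 2 * (1 + ε⁻¹) * infDist x F := by
    rw [mul_comm 2, mul_assoc]
    gcongr
  by_cases hx' : x ∈ closedBall y (ε * dist y a) ∧ y ≠ a
  · exact .inr ⟨y, ⟨hyF, hx'.2⟩, hx'.1, hxy'.trans' (le_mul_of_one_le_left dist_nonneg
      (le_add_of_nonneg_right (inv_pos.2 hε).le))⟩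
  · refine .inl (hxy'.trans' ?_)
    have hya : ε * dist y a ≤ dist x y := by
      rcases eq_or_ne y a with rfl | hne
      · simp
      · exact (not_le.1 fun h ↦ hx' ⟨h, hne⟩).le
    calc dist x a ≤ dist x y + ε⁻¹ * (ε * dist y a) := by
          rw [inv_mul_cancel_left₀ hε.ne']; exact dist_triangle ..
      _ ≤ dist x y + ε⁻¹ * dist x y := by gcongr
      _ = (1 + ε⁻¹) * dist x y := by ring

lemma rpow_neg_le_mul_rpow_neg {s t K : ℝ} (hs : 0 < s) (ht : 0 < t) (hp : 0 ≤ p)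
    (h : t ≤ K * s) : s ^ (-p) ≤ K ^ p * t ^ (-p) := by
  have hK : 0 < K := pos_of_mul_pos_left (ht.trans_le h) hs.le
  calc s ^ (-p) = K ^ p * (K * s) ^ (-p) := by
        rw [Real.mul_rpow hK.le hs.le, ← mul_assoc, ← Real.rpow_add hK, add_neg_cancel,
          Real.rpow_zero, one_mul]
    _ ≤ K ^ p * t ^ (-p) := by
        gcongr ?_ * ?_
        exact Real.rpow_le_rpow_of_nonpos ht h (neg_nonpos.2 hp)

lemma ofReal_mul_infDist_rpow_neg_le {g : α → ℝ} (hg : 0 ≤ g) (hp : 0 < p) (hε : 0 < ε)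
    (ha : a ∈ F) (x : α) :
    ENNReal.ofReal (g x * infDist x F ^ (-p)) ≤
      ENNReal.ofReal ((2 * (1 + ε⁻¹)) ^ p) * (ENNReal.ofReal (g x * dist x a ^ (-p)) +
        ∑' y : ↥(F \ {a}), (closedBall y.1 (ε * dist y.1 a)).indicator
          (fun x ↦ ENNReal.ofReal (g x * dist x y ^ (-p))) x) := by
  rcases infDist_nonneg.eq_or_lt' (a := infDist x F) with hx | hx
  · simp [hx, Real.zero_rpow (neg_ne_zero.2 hp.ne')]
  have hle (z : α) (hz : z ∈ F) (hxz : dist x z ≤ 2 * (1 + ε⁻¹) * infDist x F) :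
      ENNReal.ofReal (g x * infDist x F ^ (-p)) ≤
        ENNReal.ofReal ((2 * (1 + ε⁻¹)) ^ p) * ENNReal.ofReal (g x * dist x z ^ (-p)) := by
    rw [← ENNReal.ofReal_mul (by positivity), mul_left_comm]
    refine ENNReal.ofReal_le_ofReal (mul_le_mul_of_nonneg_left ?_ (hg x))
    exact rpow_neg_le_mul_rpow_neg hx (hx.trans_le (infDist_le_dist_of_mem hz)) hp.le hxz
  obtain hxa | ⟨y, hy, hxy, hdist⟩ := dist_le_mul_infDist_or_exists hε ha hx
  · exact (hle a ha hxa).trans (by gcongr; exact le_self_add)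
  · refine (hle y hy.1 hdist).trans ?_
    gcongr
    refine le_add_left (le_trans ?_ (ENNReal.le_tsum ⟨y, hy⟩))
    rw [Set.indicator_of_mem hxy]

lemma lintegral_mul_infDist_rpow_neg_le [MeasurableSpace α] [OpensMeasurableSpace α]
    {μ : Measure α} {g : α → ℝ} (hgm : Measurable g) (hg : 0 ≤ g) (hp : 0 < p) (hε : 0 < ε)
    (ha : a ∈ F) (hF : (F \ {a}).Countable) :
    ∫⁻ x, ENNReal.ofReal (g x * infDist x F ^ (-p)) ∂μ ≤
      ENNReal.ofReal ((2 * (1 + ε⁻¹)) ^ p) * (∫⁻ x, ENNReal.ofReal (g x * dist x a ^ (-p)) ∂μ +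
        ∑' y : ↥(F \ {a}), ∫⁻ x in closedBall y.1 (ε * dist y.1 a),
          ENNReal.ofReal (g x * dist x y ^ (-p)) ∂μ) := by
  have := hF.to_subtype
  have hmeas (z : α) : Measurable fun x ↦ ENNReal.ofReal (g x * dist x z ^ (-p)) :=
    (hgm.mul ((continuous_id.dist continuous_const).measurable.pow_const _)).ennreal_ofReal
  have hind (y : ↥(F \ {a})) : Measurable ((closedBall y.1 (ε * dist y.1 a)).indicator
      fun x ↦ ENNReal.ofReal (g x * dist x y ^ (-p))) :=
    (hmeas y).indicator measurableSet_closedBall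
  calc ∫⁻ x, ENNReal.ofReal (g x * infDist x F ^ (-p)) ∂μ
      ≤ ∫⁻ x, ENNReal.ofReal ((2 * (1 + ε⁻¹)) ^ p) * (ENNReal.ofReal (g x * dist x a ^ (-p)) +
          ∑' y : ↥(F \ {a}), (closedBall y.1 (ε * dist y.1 a)).indicator
            (fun x ↦ ENNReal.ofReal (g x * dist x y ^ (-p))) x) ∂μ :=
        lintegral_mono (ofReal_mul_infDist_rpow_neg_le hg hp hε ha)
    _ = _ := by
        rw [lintegral_const_mul' _ _ ENNReal.ofReal_ne_top, lintegral_add_left (hmeas a),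
          lintegral_tsum fun y ↦ (hind y).aemeasurable]
        congr! 4 with y
        exact lintegral_indicator measurableSet_closedBall _

end RelativeSeparation

section SeparatedComplement

variable {E : Type*} [NormedAddCommGroup E] [NormedSpace ℝ E] [FiniteDimensional ℝ E]
  [MeasurableSpace E] [BorelSpace E] {μ : Measure E} [μ.IsAddHaarMeasure]
  {F : Set E} {a : E} {p : ℝ}

lemma tsum_setLIntegral_closedBall_mul_dist_rpow_neg_le {u : E → ℝ} {L : ℝ≥0} {ε : ℝ}
    (hp : 1 < p) (hpn : p ≠ finrank ℝ E) (hu : LipschitzWith L u) (hc : HasCompactSupport u)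
    (hs : tsupport u ⊆ Fᶜ) (ha : a ∈ F) (hε : 0 < ε) (hF : (F \ {a}).Countable)
    (hdisj : (F \ {a}).PairwiseDisjoint fun y ↦ closedBall y (2 * (ε * dist y a))) :
    ∑' y : ↥(F \ {a}), ∫⁻ x in closedBall y.1 (ε * dist y.1 a),
        ENNReal.ofReal (|u x| ^ p * dist x y ^ (-p)) ∂μ ≤
      ENNReal.ofReal ((p / |finrank ℝ E - p|) ^ p) *
        ∫⁻ x, ENNReal.ofReal ((‖fderiv ℝ u x‖ + (2 + ε⁻¹) * (dist x a)⁻¹ * |u x|) ^ p) ∂μ := by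
  let G x := ENNReal.ofReal ((‖fderiv ℝ u x‖ + (2 + ε⁻¹) * (dist x a)⁻¹ * |u x|) ^ p)
  have hlocal (y : ↥(F \ {a})) : ∫⁻ x in closedBall y.1 (ε * dist y.1 a),
        ENNReal.ofReal (|u x| ^ p * dist x y ^ (-p)) ∂μ ≤
      ENNReal.ofReal ((p / |finrank ℝ E - p|) ^ p) *
        ∫⁻ x in closedBall y.1 (2 * (ε * dist y.1 a)), G x ∂μ := by
    refine (setLIntegral_closedBall_mul_dist_rpow_neg_le hp hpn hu hc (fun h ↦ hs h y.2.1)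
      (mul_pos hε (dist_pos.2 y.2.2))).trans ?_
    gcongr _ * ?_
    refine setLIntegral_mono' (μ := μ) measurableSet_closedBall fun x hx ↦ ?_
    by_cases hxu : x ∈ tsupport u
    · have hxa : x ≠ a := by
        rintro rfl
        exact hs hxu ha
      have := inv_mul_dist_le hε y.2.2 hxa hx
      dsimp only [G]
      gcongr
    · simp [G, image_eq_zero_of_notMem_tsupport hxu]
  calc _ ≤ ∑' y : ↥(F \ {a}), ENNReal.ofReal ((p / |finrank ℝ E - p|) ^ p) *
        ∫⁻ x in closedBall y.1 (2 * (ε * dist y.1 a)), G x ∂μ := ENNReal.tsum_le_tsum hlocal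
    _ = ENNReal.ofReal ((p / |finrank ℝ E - p|) ^ p) *
        ∫⁻ x in ⋃ y ∈ F \ {a}, closedBall y (2 * (ε * dist y a)), G x ∂μ := by
      rw [ENNReal.tsum_mul_left,
        lintegral_biUnion hF (fun _ _ ↦ measurableSet_closedBall) hdisj]
    _ ≤ _ := by gcongr _ * ?_; exact setLIntegral_le_lintegral _ _

theorem IsRelativelySeparated.admitsHardyInequality_compl (hF : IsRelativelySeparated a F)
    (ha : a ∈ F) (hp : 1 < p) (hpn : p ≠ finrank ℝ E) : AdmitsHardyInequality μ p Fᶜ := by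
  have hp0 : 0 < p := zero_lt_one.trans hp
  obtain ⟨ε, hε, hdisj⟩ := hF.exists_pairwiseDisjoint
  have hcount : (F \ {a}).Countable := hdisj.countable_of_nonempty_interior fun y hy ↦
    have hpos : 0 < dist y a := dist_pos.2 hy.2
    ⟨y, ball_subset_interior_closedBall (mem_ball_self (by positivity))⟩
  obtain ⟨C, hC⟩ := exists_lintegral_norm_fderiv_add_rpow_le (μ := μ) hp hpn
    (B := 2 + ε⁻¹) (by positivity) a
  let H : ℝ≥0 := ((p / |finrank ℝ E - p|) ^ p).toNNReal
  let K : ℝ≥0 := ((2 * (1 + ε⁻¹)) ^ p).toNNReal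
  rw [admitsHardyInequality_iff hp0.ne', compl_compl]
  refine ⟨K * (H + H * C), fun u ⟨L, hu⟩ hc hs ↦ ?_⟩
  have hau : a ∉ tsupport u := fun h ↦ hs h ha
  calc ∫⁻ x, ENNReal.ofReal (|u x| ^ p * infDist x F ^ (-p)) ∂μ
      ≤ K * (∫⁻ x, ENNReal.ofReal (|u x| ^ p * dist x a ^ (-p)) ∂μ +
          ∑' y : ↥(F \ {a}), ∫⁻ x in closedBall y.1 (ε * dist y.1 a),
            ENNReal.ofReal (|u x| ^ p * dist x y ^ (-p)) ∂μ) :=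
        lintegral_mul_infDist_rpow_neg_le (hu.continuous.measurable.norm.pow_const p)
          (fun x ↦ by positivity) hp0 hε ha hcount
    _ ≤ K * (H * dirichletEnergy μ p u + H * (C * dirichletEnergy μ p u)) := by
        gcongr
        · exact lintegral_mul_dist_rpow_neg_le hp hpn hu hc hau
        · refine (tsum_setLIntegral_closedBall_mul_dist_rpow_neg_le hp hpn hu hc hs ha hε hcount
            hdisj).trans ?_
          gcongr
          exacts [le_rfl, hC u L hu hc hau]
    _ = ↑(K * (H + H * C)) * dirichletEnergy μ p u := by push_cast; ring

theorem hardy_punctured_sequence_example_general [Nontrivial E] (hF : IsRelativelySeparated a F)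
    (ha : a ∈ F) (hp : 1 < p) (hpn : p ≠ finrank ℝ E) (b : E) {R : ℝ} (hR : 0 < R) :
    AdmitsHardyInequality μ p (ball b R \ F) := by
  rw [Set.sdiff_eq]
  exact (admitsHardyInequality_ball hp b hR).inter (zero_lt_one.trans hp).ne'
    (hF.admitsHardyInequality_compl ha hp hpn)

end SeparatedComplement

lemma isRelativelySeparated_insert_zero_two_pow_inv_smul {E : Type*} [NormedAddCommGroup E]
    [NormedSpace ℝ E] (e : E) (k : ℕ) :
    IsRelativelySeparated 0 (insert 0 {x | ∃ j : ℕ, k ≤ j ∧ x = ((2 : ℝ) ^ j)⁻¹ • e}) := by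
  have hhalf {i j : ℕ} (hij : i < j) : ((2 : ℝ) ^ j)⁻¹ ≤ 2⁻¹ * (2 ^ i)⁻¹ := by
    rw [← mul_inv, ← pow_succ']
    gcongr
    exacts [one_le_two, hij]
  have hgap (i j : ℕ) (hij : i ≠ j) :
      2⁻¹ * ((2 : ℝ) ^ i)⁻¹ ≤ |(2 ^ i)⁻¹ - (2 ^ j)⁻¹| := by
    rcases hij.lt_or_gt with h | h
    · linarith [hhalf h, le_abs_self (((2 : ℝ) ^ i)⁻¹ - (2 ^ j)⁻¹)]
    · linarith [hhalf h, neg_le_abs (((2 : ℝ) ^ i)⁻¹ - (2 ^ j)⁻¹),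
        inv_pos.2 (pow_pos (zero_lt_two' ℝ) i)]
  refine ⟨2⁻¹, by norm_num, ?_⟩
  rintro x (rfl | ⟨i, -, rfl⟩) y (rfl | ⟨j, -, rfl⟩) hxy
  · exact absurd rfl hxy
  · simp
  · rw [dist_zero_right]
    linarith [norm_nonneg (((2 : ℝ) ^ i)⁻¹ • e)]
  · have hij : i ≠ j := fun h ↦ hxy (by rw [h])
    rw [dist_zero_right, dist_eq_norm, ← sub_smul, norm_smul, norm_smul, ← mul_assoc,
      Real.norm_eq_abs, Real.norm_eq_abs, abs_of_pos (by positivity)]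
    gcongr
    exact hgap i j hij

/-- (First claim of Example 8.1 of the paper.) For `n ≥ 2`, the domain
`Ω₁ = B(0,2) \ F ⊆ ℝⁿ`, where `F = {0} ∪ {2^{-j} e₁ : j ≥ 2}`, admits a `p`-Hardy
inequality for every `1 < p < n`. -/
theorem hardy_punctured_sequence_example
    (n : ℕ) (hn : 2 ≤ n)
    (e₁ : EuclideanSpace ℝ (Fin n))
    (he₁ : e₁ = EuclideanSpace.single (⟨0, by omega⟩ : Fin n) (1 : ℝ))
    (F : Set (EuclideanSpace ℝ (Fin n)))
    (hF : F = insert 0 {x | ∃ j : ℕ, 2 ≤ j ∧ x = ((2 : ℝ) ^ j)⁻¹ • e₁})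
    (Ω₁ : Set (EuclideanSpace ℝ (Fin n)))
    (hΩ₁ : Ω₁ = Metric.ball 0 2 \ F)
    (p : ℝ) (hp1 : 1 < p) (hpn : p < n) :
    ∃ C : ℝ, 0 < C ∧ ∀ u : EuclideanSpace ℝ (Fin n) → ℝ,
      (∃ L : NNReal, LipschitzWith L u) → HasCompactSupport u → tsupport u ⊆ Ω₁ →
      ∫⁻ x in Ω₁, ENNReal.ofReal (|u x| ^ p * Metric.infDist x Ω₁ᶜ ^ (-p)) ≤
        ENNReal.ofReal C * ∫⁻ x in Ω₁, ENNReal.ofReal (‖fderiv ℝ u x‖ ^ p) := by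
  subst hΩ₁ hF
  have : NeZero n := ⟨by omega⟩
  exact hardy_punctured_sequence_example_general
    (isRelativelySeparated_insert_zero_two_pow_inv_smul e₁ 2) (Set.mem_insert ..) hp1
    (by simpa using hpn.ne) 0 two_pos
end
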